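/- Let X : ℂⁿ → ℂⁿ be holomorphic on a neighborhood of 0 with X(0) = 0, and suppose X preserves the real subspace: whenever every coordinate of x is real, every coordinate of X(x) is real. Let X_ℝ : ℝⁿ → ℝⁿ be the induced real analytic vector field near 0 ∈ ℝⁿ (the restriction of X to real points, with values read as real vectors). Then X_ℝ admits a convergent Poincaré–Dulac normalization over ℝ if and only if X admits a convergent Poincaré–Dulac normalization over ℂ. -/

import Mathlib

/-- `Y` is in Poincaré–Dulac normal form on the neighborhood `U` of `0`:
writing the Jordan–Chevalley decomposition `DY(0) = S + N` with `S` semisimple,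
`N` nilpotent and `S ∘ N = N ∘ S`, the Lie bracket `[Y, Yˢ]` (where `Yˢ x = S x`)
vanishes on `U`. -/
def InPDNormalForm (𝕂 : Type*) [NontriviallyNormedField 𝕂] {n : ℕ}
    (Y : (Fin n → 𝕂) → (Fin n → 𝕂)) (U : Set (Fin n → 𝕂)) : Prop :=
  ∃ S N : (Fin n → 𝕂) →L[𝕂] (Fin n → 𝕂),
    fderiv 𝕂 Y 0 = S + N ∧
    Module.End.IsSemisimple (S : Module.End 𝕂 (Fin n → 𝕂)) ∧
    IsNilpotent (N : Module.End 𝕂 (Fin n → 𝕂)) ∧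
    S ∘L N = N ∘L S ∧
    ∀ x ∈ U, VectorField.lieBracket 𝕂 Y (fun y => S y) x = 0

/-- `X` admits a convergent Poincaré–Dulac normalization: there are an analytic
vector field `Y` near `0`, in Poincaré–Dulac normal form with `Y 0 = 0`, and an
analytic map `φ` near `0` with `φ 0 = 0` and `Dφ(0)` invertible, such that
`Dφ(x) (Y x) = X (φ x)` for all `x` near `0`. -/
def AdmitsPDNormalization (𝕂 : Type*) [NontriviallyNormedField 𝕂] {n : ℕ}
    (X : (Fin n → 𝕂) → (Fin n → 𝕂)) : Prop :=
  ∃ (V : Set (Fin n → 𝕂)) (Y φ : (Fin n → 𝕂) → (Fin n → 𝕂)),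
    IsOpen V ∧ (0 : Fin n → 𝕂) ∈ V ∧
    AnalyticOnNhd 𝕂 Y V ∧ AnalyticOnNhd 𝕂 φ V ∧
    Y 0 = 0 ∧ φ 0 = 0 ∧ Function.Bijective (fderiv 𝕂 φ 0) ∧
    InPDNormalForm 𝕂 Y V ∧
    ∀ x ∈ V, fderiv 𝕂 φ x (Y x) = X (φ x)

/-!
Let `X` be in normal form `Y` after the change of coordinates `ψ`, with `ψ` tangent to the identity,
and let `S` be the semisimple part of `DY(0)`. If two normal forms `Y` and `Y'` are related by `χ`,
then so are their linear vector fields `S` and `S'`. Indeed, the defect `Dχ · S - S' ∘ χ` satisfies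
a linear equation along `Y`, because `[Y, S] = 0 = [Y', S']`; its lowest order term is the image of
the Taylor coefficient of `χ` under the homological operator of `S`, `S'` and is killed by the
homological operator of `DY(0)`, `DY'(0)`. The latter operator is the former, which is semisimple,
plus a nilpotent operator commuting with it, so that the lowest order term vanishes.

If `X` commutes with complex conjugation, then the conjugate `ψ'` of `ψ` normalizes `X` as well, and
the transition `χ` from `ψ` to `ψ'` commutes with `S`, since `Dχ(0) = id` forces the two semisimple
parts to agree. Hence `(id + χ) / 2` commutes with `S` and preserves normal forms, so that the map
`(ψ + ψ') / 2 = (id + χ) / 2 ∘ ψ` is a normalization commuting with conjugation, and it restricts to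
the real points. The converse is the complexification of convergent power series, where identities
extend from the real points by the identity theorem.
-/

section SemisimpleNilpotent

open Polynomial

variable {K K' V V' : Type*} [Field K] [Field K'] [AddCommGroup V] [Module K V] [AddCommGroup V']
  [Module K' V'] {σ : K →+* K'} {q : V →ₛₗ[σ] V'} {T : Module.End K V} {T' : Module.End K' V'}

lemma aeval_map_apply_of_intertwining (h : ∀ v, q (T v) = T' (q v)) (p : K[X]) (v : V) :
    aeval T' (p.map σ) (q v) = q (aeval T p v) := by
  induction p using Polynomial.induction_on generalizing v with
  | C a => simp [Module.algebraMap_end_apply]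
  | add p r hp hr => simp [hp, hr]
  | monomial n a ih =>
    rw [pow_succ, ← mul_assoc, Polynomial.map_mul, map_X, map_mul, map_mul, aeval_X, aeval_X,
      Module.End.mul_apply, Module.End.mul_apply, ← h, ih]

lemma isSemisimple_of_intertwining [PerfectField K] [FiniteDimensional K V]
    (hq : Submodule.span K' (Set.range q) = ⊤) (h : ∀ v, q (T v) = T' (q v))
    (hT : T.IsSemisimple) : T'.IsSemisimple := by
  have hsep : (minpoly K T).Separable :=
    PerfectField.separable_iff_squarefree.2 hT.minpoly_squarefree
  refine Module.End.isSemisimple_of_squarefree_aeval_eq_zero (hsep.map (f := σ)).squarefree ?_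
  refine LinearMap.ext_on_range hq fun v => ?_
  rw [aeval_map_apply_of_intertwining h, minpoly.aeval, LinearMap.zero_apply, map_zero,
    LinearMap.zero_apply]

lemma isNilpotent_of_intertwining (hq : Submodule.span K' (Set.range q) = ⊤)
    (h : ∀ v, q (T v) = T' (q v)) (hT : IsNilpotent T) : IsNilpotent T' := by
  obtain ⟨m, hm⟩ := hT
  refine ⟨m, LinearMap.ext_on_range hq fun v => ?_⟩
  have := aeval_map_apply_of_intertwining h (X ^ m) v
  rwa [Polynomial.map_pow, map_X, aeval_X_pow, aeval_X_pow, hm, LinearMap.zero_apply,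
    map_zero] at this

lemma isNilpotent_of_injective_intertwining (hq : Function.Injective q)
    (h : ∀ v, q (T v) = T' (q v)) (hT' : IsNilpotent T') : IsNilpotent T := by
  obtain ⟨m, hm⟩ := hT'
  refine ⟨m, LinearMap.ext fun v => hq ?_⟩
  have := aeval_map_apply_of_intertwining h (X ^ m) v
  rw [Polynomial.map_pow, map_X, aeval_X_pow, aeval_X_pow, hm] at this
  rw [← this, LinearMap.zero_apply, LinearMap.zero_apply, map_zero]

lemma isSemisimple_of_injective_intertwining [PerfectField K] [FiniteDimensional K V]
    [FiniteDimensional K' V'] (hq : Function.Injective q)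
    (hspan : Submodule.span K' (Set.range q) = ⊤) (h : ∀ v, q (T v) = T' (q v))
    (hT' : T'.IsSemisimple) : T.IsSemisimple := by
  obtain ⟨N, hNT, S, -, hN, hS, hTNS⟩ := T.exists_isNilpotent_isSemisimple
  rw [Algebra.adjoin_singleton_eq_range_aeval] at hNT
  obtain ⟨r, rfl : aeval T r = N⟩ := hNT
  have hr (v : V) : q (aeval T r v) = aeval T' (r.map σ) (q v) :=
    (aeval_map_apply_of_intertwining h r v).symm
  have hzero : aeval T' (r.map σ) = 0 := Module.End.eq_zero_of_isNilpotent_isSemisimple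
    (isNilpotent_of_intertwining hspan hr hN) (hT'.aeval _)
  have hN0 : aeval T r = 0 := LinearMap.ext fun v => hq <| by
    rw [hr, hzero, LinearMap.zero_apply, LinearMap.zero_apply, map_zero]
  rwa [hTNS, hN0, zero_add]

variable {U : Module.End K V}

lemma apply_eq_zero_of_isSemisimple_of_isNilpotent (hT : T.IsSemisimple) (hU : IsNilpotent U)
    (hTU : Commute T U) {v : V} (hv : (T + U) (T v) = 0) : T v = 0 := by
  let W := LinearMap.ker (T + U)
  have hW : ∀ w ∈ W, T w ∈ W := fun w (hw : (T + U) w = 0) => by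
    have hcomm : Commute (T + U) T := (Commute.refl T).add_left hTU.symm
    change ((T + U) * T) w = 0
    rw [hcomm.eq, Module.End.mul_apply, hw, map_zero]
  have hTW (w : W) : W.subtype (T.restrict hW w) = (-U) (W.subtype w) :=
    eq_neg_of_add_eq_zero_left w.2
  have hnil : IsNilpotent (T.restrict hW) :=
    isNilpotent_of_injective_intertwining W.subtype_injective hTW hU.neg
  have hzero : T.restrict hW = 0 :=
    Module.End.eq_zero_of_isNilpotent_isSemisimple hnil (hT.restrict hW)
  have hTT : (T ^ 2) v = 0 := by
    simpa [sq] using congrArg Subtype.val (LinearMap.congr_fun hzero ⟨T v, hv⟩)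
  have hker := hT.isFinitelySemisimple.genEigenspace_eq_eigenspace 0 (k := ((2 : ℕ) : ℕ∞)) (by simp)
  have hmem : v ∈ T.genEigenspace 0 ((2 : ℕ) : ℕ∞) := by
    rwa [Module.End.mem_genEigenspace_nat, zero_smul, sub_zero]
  rwa [hker, Module.End.mem_eigenspace_iff, zero_smul] at hmem

lemma apply_mem_of_isSemisimple_of_isNilpotent [PerfectField K] [FiniteDimensional K V]
    (hT : T.IsSemisimple) (hU : IsNilpotent U) (hTU : Commute T U) {P : Submodule K V}
    (hPT : P ≤ P.comap T) (hPU : P ≤ P.comap U) {v : V} (hv : (T + U) (T v) ∈ P) : T v ∈ P := by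
  have hspan : Submodule.span K (Set.range P.mkQ) = ⊤ := by
    rw [P.mkQ_surjective.range_eq, Submodule.span_univ]
  let T' : Module.End K (V ⧸ P) := P.mapQ P T hPT
  let U' : Module.End K (V ⧸ P) := P.mapQ P U hPU
  have hT' : T'.IsSemisimple := isSemisimple_of_intertwining hspan (fun _ => rfl) hT
  have hU' : IsNilpotent U' := isNilpotent_of_intertwining hspan (fun _ => rfl) hU
  have hTU' : Commute T' U' := LinearMap.ext_on_range hspan fun w =>
    congrArg P.mkQ (LinearMap.congr_fun hTU.eq w)
  have hv' : (T' + U') (T' (P.mkQ v)) = 0 := (Submodule.Quotient.mk_eq_zero P).2 hv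
  exact (Submodule.Quotient.mk_eq_zero P).1
    (apply_eq_zero_of_isSemisimple_of_isNilpotent hT' hU' hTU' hv')

end SemisimpleNilpotent

section MultilinearOperators

open MulOpposite

variable {K V W ι : Type*} [Field K] [AddCommGroup V] [Module K V] [AddCommGroup W] [Module K W]

/-- Precomposition of multilinear maps with an endomorphism in the slot `i`, as an algebra
homomorphism; it reverses the order of composition, whence the opposite algebra. -/
def precompAt [DecidableEq ι] (i : ι) :
    (Module.End K V)ᵐᵒᵖ →ₐ[K] Module.End K (MultilinearMap K (fun _ : ι => V) W) :=
  AlgHom.ofLinearMap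
    (MultilinearMap.compLinearMapMultilinear.toLinearMap (fun _ => LinearMap.id) i ∘ₗ
      (opLinearEquiv K).symm.toLinearMap)
    (LinearMap.ext fun m => MultilinearMap.ext fun v => congrArg m <| funext fun j => by
      simp [Module.End.one_eq_id])
    (fun S T => LinearMap.ext fun m => MultilinearMap.ext fun v => congrArg m <| funext fun j => by
      obtain rfl | h := eq_or_ne j i <;> simp [*])

lemma precompAt_apply [DecidableEq ι] (i : ι) (S : Module.End K V)
    (m : MultilinearMap K (fun _ : ι => V) W) (v : ι → V) :
    precompAt i (op S) m v = m (Function.update v i (S (v i))) :=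
  congrArg m <| funext fun j => by obtain rfl | h := eq_or_ne j i <;> simp [*]

lemma commute_precompAt [DecidableEq ι] (i j : ι) {S T : Module.End K V} (h : Commute S T) :
    Commute (precompAt (W := W) i (op S)) (precompAt j (op T)) := by
  rcases eq_or_ne i j with rfl | hij
  · exact h.op.map (precompAt i)
  · refine LinearMap.ext fun m => MultilinearMap.ext fun v => ?_
    simp only [Module.End.mul_apply, precompAt_apply, Function.update_comm hij,
      Function.update_of_ne hij, Function.update_of_ne hij.symm]

lemma isSemisimple_precompAt [DecidableEq ι] [FiniteDimensional K V] (i : ι) {S : Module.End K V}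
    (hS : S.IsSemisimple) : (precompAt (W := W) i (op S)).IsSemisimple := by
  refine Module.End.isSemisimple_of_squarefree_aeval_eq_zero hS.minpoly_squarefree ?_
  rw [Polynomial.aeval_algHom_apply, Polynomial.aeval_op_apply, minpoly.aeval, op_zero, map_zero]

/-- Postcomposition of multilinear maps with an endomorphism, as an algebra homomorphism. -/
def postcomp (ι V : Type*) [AddCommGroup V] [Module K V] :
    Module.End K W →ₐ[K] Module.End K (MultilinearMap K (fun _ : ι => V) W) :=
  AlgHom.ofLinearMap
    { toFun := LinearMap.compMultilinearMapₗ K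
      map_add' _ _ := rfl
      map_smul' _ _ := rfl } rfl fun _ _ => rfl

lemma postcomp_apply (S : Module.End K W) (m : MultilinearMap K (fun _ : ι => V) W) (v : ι → V) :
    postcomp ι V S m v = S (m v) := rfl

lemma isSemisimple_postcomp [FiniteDimensional K W] {S : Module.End K W} (hS : S.IsSemisimple) :
    (postcomp ι V S).IsSemisimple := by
  refine Module.End.isSemisimple_of_squarefree_aeval_eq_zero hS.minpoly_squarefree ?_
  rw [Polynomial.aeval_algHom_apply, minpoly.aeval, map_zero]

lemma commute_precompAt_postcomp [DecidableEq ι] (i : ι) (S : Module.End K V)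
    (S' : Module.End K W) : Commute (precompAt i (op S)) (postcomp ι V S') := by
  refine LinearMap.ext fun m => MultilinearMap.ext fun v => ?_
  simp only [Module.End.mul_apply, precompAt_apply, postcomp_apply]

variable [DecidableEq ι] [Fintype ι] {S N : Module.End K V} {S' N' : Module.End K W}

variable (ι) in
/-- The homological operator `m ↦ ∑ᵢ m (…, S vᵢ, …) - S' (m v)` on multilinear maps. On the
homogeneous polynomial map `f y = m (y, …, y)` it acts by `f ↦ Df · S - S' ∘ f`. -/
def homologicalOperator (S : Module.End K V) (S' : Module.End K W) :
    Module.End K (MultilinearMap K (fun _ : ι => V) W) :=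
  ∑ i, precompAt i (op S) - postcomp ι V S'

lemma homologicalOperator_apply (m : MultilinearMap K (fun _ : ι => V) W) (v : ι → V) :
    homologicalOperator ι S S' m v =
      ∑ i, m (Function.update v i (S (v i))) - S' (m v) := by
  simp [homologicalOperator, LinearMap.sum_apply, precompAt_apply, postcomp_apply]

lemma homologicalOperator_add (S N : Module.End K V) (S' N' : Module.End K W) :
    homologicalOperator ι (S + N) (S' + N') =
      homologicalOperator ι S S' + homologicalOperator ι N N' := by
  simp only [homologicalOperator, op_add, map_add, Finset.sum_add_distrib]
  abel

lemma commute_sum_precompAt_postcomp :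
    Commute (∑ i, precompAt i (op S)) (postcomp ι V S') :=
  Commute.sum_left _ _ _ fun i _ => commute_precompAt_postcomp i S S'

lemma commute_homologicalOperator (h : Commute S N) (h' : Commute S' N') :
    Commute (homologicalOperator ι S S') (homologicalOperator ι N N') :=
  .sub_left
    (.sub_right
      (Commute.sum_left _ _ _ fun i _ => Commute.sum_right _ _ _ fun j _ => commute_precompAt i j h)
      commute_sum_precompAt_postcomp)
    (.sub_right commute_sum_precompAt_postcomp.symm (h'.map (postcomp ι V)))

lemma isSemisimple_homologicalOperator [PerfectField K] [FiniteDimensional K V]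
    [FiniteDimensional K W] (hS : S.IsSemisimple) (hS' : S'.IsSemisimple) :
    (homologicalOperator ι S S').IsSemisimple := by
  have hsum (s : Finset ι) : (∑ i ∈ s, precompAt (W := W) i (op S)).IsSemisimple := by
    induction s using Finset.induction_on with
    | empty => simp
    | insert i s hi ih =>
      rw [Finset.sum_insert hi]
      exact (isSemisimple_precompAt i hS).add_of_commute
        (Commute.sum_right _ _ _ fun j _ => commute_precompAt i j (Commute.refl S)) ih
  exact (hsum _).sub_of_commute commute_sum_precompAt_postcomp (isSemisimple_postcomp hS')

lemma isNilpotent_homologicalOperator (hN : IsNilpotent N) (hN' : IsNilpotent N') :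
    IsNilpotent (homologicalOperator ι N N') := by
  have hop : IsNilpotent (op N) := hN.imp fun m hm => by rw [← op_pow, hm, op_zero]
  have hsum : IsNilpotent (∑ i : ι, precompAt (W := W) i (op N)) :=
    Commute.isNilpotent_sum (fun i _ => hop.map (precompAt i))
      fun i j _ _ => commute_precompAt i j (Commute.refl N)
  exact commute_sum_precompAt_postcomp.isNilpotent_sub hsum (hN'.map (postcomp ι V))

end MultilinearOperators

section Diagonal

variable {𝕜 E F ι : Type*} [NontriviallyNormedField 𝕜] [NormedAddCommGroup E] [NormedSpace 𝕜 E]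
  [NormedAddCommGroup F] [NormedSpace 𝕜 F] [Fintype ι]

lemma multilinearMap_apply_eq_sum_basis {R M N ι κ : Type*} [CommSemiring R] [AddCommMonoid M]
    [Module R M] [AddCommMonoid N] [Module R N] [Fintype ι] [DecidableEq ι] [Fintype κ]
    (b : Module.Basis κ R M) (m : MultilinearMap R (fun _ : ι => M) N) (v : ι → M) :
    m v = ∑ r : ι → κ, (∏ i, b.coord (r i) (v i)) • m fun i => b (r i) := by
  conv_lhs => rw [show v = fun i => ∑ a, b.coord a (v i) • b a from
    funext fun i => (b.sum_repr (v i)).symm]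
  rw [m.map_sum]
  exact Finset.sum_congr rfl fun r _ => m.map_smul_univ _ _

lemma continuous_of_multilinearMap_finiteDimensional {ι : Type*} [Finite ι] [CompleteSpace 𝕜]
    [FiniteDimensional 𝕜 E] (m : MultilinearMap 𝕜 (fun _ : ι => E) F) : Continuous m := by
  classical
  have := Fintype.ofFinite ι
  let b := Module.finBasis 𝕜 E
  have hcoord (a) : Continuous (b.coord a) := LinearMap.continuous_of_finiteDimensional _
  rw [show ⇑m = _ from funext (multilinearMap_apply_eq_sum_basis b m)]
  fun_prop

lemma hasFDerivAt_diagonal [DecidableEq ι] (p : ContinuousMultilinearMap 𝕜 (fun _ : ι => E) F)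
    (y : E) : HasFDerivAt (fun y => p fun _ => y)
      (∑ i, p.toContinuousLinearMap (fun _ => y) i) y := by
  simpa using HasFDerivAt.multilinear_comp p (g := fun _ y => y)
    (g' := fun _ => ContinuousLinearMap.id 𝕜 E) fun _ => hasFDerivAt_id y

lemma homologicalOperator_diagonal [DecidableEq ι]
    (p : ContinuousMultilinearMap 𝕜 (fun _ : ι => E) F) (S : E →L[𝕜] E) (S' : F →L[𝕜] F) (y : E) :
    homologicalOperator ι (S : Module.End 𝕜 E) S' p.toMultilinearMap (fun _ => y) =
      fderiv 𝕜 (fun y => p fun _ => y) y (S y) - S' (p fun _ => y) := by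
  rw [(hasFDerivAt_diagonal p y).fderiv, homologicalOperator_apply]
  simp

/-- The multilinear maps whose associated homogeneous polynomial map vanishes. -/
def diagonalKernel (𝕜 ι E F : Type*) [NontriviallyNormedField 𝕜] [NormedAddCommGroup E]
    [NormedSpace 𝕜 E] [NormedAddCommGroup F] [NormedSpace 𝕜 F] :
    Submodule 𝕜 (MultilinearMap 𝕜 (fun _ : ι => E) F) where
  carrier := {m | ∀ y, m (fun _ => y) = 0}
  add_mem' hm hm' y := by simp [hm y, hm' y]
  zero_mem' y := by simp
  smul_mem' c m hm y := by simp [hm y]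

variable [CompleteSpace 𝕜] [FiniteDimensional 𝕜 E] [DecidableEq ι]

lemma diagonalKernel_le_comap_homologicalOperator (S : E →L[𝕜] E) (S' : F →L[𝕜] F) :
    diagonalKernel 𝕜 ι E F ≤
      (diagonalKernel 𝕜 ι E F).comap (homologicalOperator ι (S : Module.End 𝕜 E) S') := by
  intro m hm y
  let p : ContinuousMultilinearMap 𝕜 (fun _ : ι => E) F :=
    ⟨m, continuous_of_multilinearMap_finiteDimensional m⟩
  have hp : (fun y => p fun _ => y) = fun _ => 0 := funext hm
  refine (homologicalOperator_diagonal p S S' y).trans ?_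
  rw [hp, fderiv_fun_const, show p (fun _ => y) = 0 from hm y]
  simp

lemma homologicalOperator_mem_diagonalKernel [PerfectField 𝕜] [FiniteDimensional 𝕜 F]
    {S N : E →L[𝕜] E} {S' N' : F →L[𝕜] F}
    (hS : Module.End.IsSemisimple (S : Module.End 𝕜 E)) (hN : IsNilpotent (N : Module.End 𝕜 E))
    (hSN : Commute (S : Module.End 𝕜 E) N)
    (hS' : Module.End.IsSemisimple (S' : Module.End 𝕜 F))
    (hN' : IsNilpotent (N' : Module.End 𝕜 F)) (hSN' : Commute (S' : Module.End 𝕜 F) N')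
    {m : MultilinearMap 𝕜 (fun _ : ι => E) F}
    (hm : homologicalOperator ι ((S + N : E →L[𝕜] E) : Module.End 𝕜 E) (S' + N' : F →L[𝕜] F)
      (homologicalOperator ι (S : Module.End 𝕜 E) S' m) ∈ diagonalKernel 𝕜 ι E F) :
    homologicalOperator ι (S : Module.End 𝕜 E) S' m ∈ diagonalKernel 𝕜 ι E F := by
  have hT := isSemisimple_homologicalOperator (ι := ι) hS hS'
  have hU := isNilpotent_homologicalOperator (ι := ι) hN hN'
  have hTU := commute_homologicalOperator (ι := ι) hSN hSN'
  refine apply_mem_of_isSemisimple_of_isNilpotent hT hU hTU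
    (diagonalKernel_le_comap_homologicalOperator S S')
    (diagonalKernel_le_comap_homologicalOperator N N') ?_
  rw [ContinuousLinearMap.toLinearMap_add, ContinuousLinearMap.toLinearMap_add,
    homologicalOperator_add] at hm
  exact hm

end Diagonal

section Asymptotics

open Asymptotics Filter Topology

lemma isBigO_diagonal {𝕜 E F ι : Type*} [NontriviallyNormedField 𝕜] [NormedAddCommGroup E]
    [NormedSpace 𝕜 E] [NormedAddCommGroup F] [NormedSpace 𝕜 F] [Fintype ι]
    (p : ContinuousMultilinearMap 𝕜 (fun _ : ι => E) F) (l : Filter E) :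
    (fun y => p fun _ => y) =O[l] fun y => ‖y‖ ^ Fintype.card ι :=
  IsBigO.of_bound ‖p‖ <| Eventually.of_forall fun y => by simpa using p.le_opNorm fun _ => y

lemma eventually_eq_zero_of_forall_isBigO_pow {𝕜 E F : Type*} [NontriviallyNormedField 𝕜]
    [NormedAddCommGroup E] [NormedSpace 𝕜 E] [NormedAddCommGroup F] [NormedSpace 𝕜 F] {f : E → F}
    (hf : AnalyticAt 𝕜 f 0) (h : ∀ k : ℕ, f =O[𝓝 0] fun y => ‖y‖ ^ k) :
    ∀ᶠ y in 𝓝 0, f y = 0 := by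
  obtain ⟨p, r, hp⟩ := hf
  have hdiag (k : ℕ) : ∀ y, p k (fun _ => y) = 0 := by
    induction k using Nat.strong_induction_on with
    | _ k ih =>
      refine IsBigO.continuousMultilinearMap_apply_eq_zero ?_
      refine ((h (k + 1)).sub (hp.hasFPowerSeriesAt.isBigO_sub_partialSum_pow (k + 1))).congr_left
        fun y => ?_
      rw [FormalMultilinearSeries.partialSum, Finset.sum_range_succ,
        Finset.sum_eq_zero fun i hi => ih i (Finset.mem_range.1 hi) y, zero_add, zero_add,
        sub_sub_cancel]
  filter_upwards [Metric.eball_mem_nhds (0 : E) hp.r_pos] with y hy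
  have hsum := hp.hasSum hy
  simp only [hdiag, zero_add] at hsum
  exact hsum.unique hasSum_zero

lemma isBigO_sub_fderiv_apply {𝕜 E F : Type*} [NontriviallyNormedField 𝕜] [NormedAddCommGroup E]
    [NormedSpace 𝕜 E] [NormedAddCommGroup F] [NormedSpace 𝕜 F] {f : E → F}
    (hf : AnalyticAt 𝕜 f 0) :
    (fun y => f y - f 0 - fderiv 𝕜 f 0 y) =O[𝓝 0] fun y => ‖y‖ ^ 2 := by
  obtain ⟨p, hp⟩ := hf
  refine (hp.isBigO_sub_partialSum_pow 2).congr_left fun y => ?_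
  have hp1 : fderiv 𝕜 f 0 y = p 1 fun _ => y := by
    rw [hp.hasFDerivAt.fderiv]
    rfl
  rw [zero_add, FormalMultilinearSeries.partialSum, Finset.sum_range_succ, Finset.sum_range_one,
    hp.coeff_zero, hp1, sub_sub]

variable {E F : Type*} [NormedAddCommGroup E] [NormedSpace ℂ E] [NormedAddCommGroup F]
  [NormedSpace ℂ F] {g : E → F} {k : ℕ}

lemma isBigO_norm_mul_norm_fderiv (hg : ∀ᶠ y in 𝓝 0, DifferentiableAt ℂ g y)
    (hgO : g =O[𝓝 0] fun y => ‖y‖ ^ k) :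
    (fun y => ‖y‖ * ‖fderiv ℂ g y‖) =O[𝓝 0] fun y => ‖y‖ ^ k := by
  obtain ⟨K, hK0, hK⟩ := hgO.exists_pos
  obtain ⟨δ, hδ, hball⟩ := Metric.eventually_nhds_iff_ball.1 (hg.and hK.bound)
  refine IsBigO.of_bound (2 * (K * 2 ^ k)) ?_
  filter_upwards [Metric.ball_mem_nhds (0 : E) (half_pos hδ)] with y hy
  rcases eq_or_ne y 0 with rfl | hy0
  · simpa using by positivity
  have hnorm {z : E} (hz : z ∈ Metric.ball y ‖y‖) : ‖z‖ ≤ 2 * ‖y‖ := by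
    linarith [mem_ball_iff_norm.1 hz, norm_le_norm_add_norm_sub' z y]
  have hin {z : E} (hz : z ∈ Metric.ball y ‖y‖) : z ∈ Metric.ball (0 : E) δ := by
    rw [mem_ball_zero_iff] at hy ⊢
    linarith [hnorm hz]
  have hbound {z : E} (hz : z ∈ Metric.ball y ‖y‖) : ‖g z‖ ≤ K * (2 * ‖y‖) ^ k := by
    have := (hball z (hin hz)).2
    rw [norm_pow, norm_norm] at this
    exact this.trans (by gcongr; exact hnorm hz)
  have hmaps : Set.MapsTo g (Metric.ball y ‖y‖)
      (Metric.closedBall (g y) (2 * (K * (2 * ‖y‖) ^ k))) := fun z hz => by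
    rw [mem_closedBall_iff_norm, two_mul]
    exact norm_sub_le_of_le (hbound hz) (hbound (Metric.mem_ball_self (norm_pos_iff.2 hy0)))
  have hderiv := Complex.norm_fderiv_le_div_of_mapsTo_ball
    (fun z hz => (hball z (hin hz)).1.differentiableWithinAt) hmaps (norm_pos_iff.2 hy0)
  rw [le_div_iff₀' (norm_pos_iff.2 hy0)] at hderiv
  rw [norm_mul, norm_pow, norm_norm, norm_norm]
  exact hderiv.trans_eq (by ring)

lemma isBigO_fderiv_apply {W : E → E} (a : ℕ) (hg : ∀ᶠ y in 𝓝 0, DifferentiableAt ℂ g y)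
    (hgO : g =O[𝓝 0] fun y => ‖y‖ ^ k) (hW : W =O[𝓝 0] fun y => ‖y‖ ^ (a + 1)) :
    (fun y => fderiv ℂ g y (W y)) =O[𝓝 0] fun y => ‖y‖ ^ (k + a) := by
  have hle : (fun y => fderiv ℂ g y (W y)) =O[𝓝 0] fun y => ‖fderiv ℂ g y‖ * ‖W y‖ :=
    IsBigO.of_bound' <| Eventually.of_forall fun y =>
      ((fderiv ℂ g y).le_opNorm (W y)).trans (le_abs_self _)
  have hmul : (fun y => ‖fderiv ℂ g y‖ * ‖W y‖) =O[𝓝 0]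
      fun y => ‖fderiv ℂ g y‖ * ‖y‖ ^ (a + 1) := (isBigO_refl _ _).mul hW.norm_left
  refine (hle.trans hmul).trans (IsBigO.congr ?_ (fun y => ?_) (fun y => (pow_add _ k a).symm)
    (f₁ := fun y => ‖y‖ * ‖fderiv ℂ g y‖ * ‖y‖ ^ a) (g₁ := fun y => ‖y‖ ^ k * ‖y‖ ^ a))
  · exact (isBigO_norm_mul_norm_fderiv hg hgO).mul (isBigO_refl _ _)
  · ring

end Asymptotics

section RelatedGerms

open Filter Topology VectorField
open scoped ContDiff

/-- The germs at `0` of the vector fields `X` on `E` and `Y` on `F` are related by `φ : E → F`,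
i.e. `φ` maps the flow of `X` to the flow of `Y`. -/
def RelatedAtZero (𝕜 : Type*) {E F : Type*} [NontriviallyNormedField 𝕜] [NormedAddCommGroup E]
    [NormedSpace 𝕜 E] [NormedAddCommGroup F] [NormedSpace 𝕜 F] (φ : E → F) (X : E → E)
    (Y : F → F) : Prop :=
  ∀ᶠ x in 𝓝 0, fderiv 𝕜 φ x (X x) = Y (φ x)

/-- The germs at `0` of `φ : E → F` and `ψ : F → E` are analytic, fix `0` and are inverse to each
other. -/
structure IsInverseGermPair (𝕜 : Type*) {E F : Type*} [NontriviallyNormedField 𝕜]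
    [NormedAddCommGroup E] [NormedSpace 𝕜 E] [NormedAddCommGroup F] [NormedSpace 𝕜 F]
    (φ : E → F) (ψ : F → E) : Prop where
  analyticAt : AnalyticAt 𝕜 φ 0
  analyticAt_inv : AnalyticAt 𝕜 ψ 0
  map_zero : φ 0 = 0
  inv_map_zero : ψ 0 = 0
  left_inv : ∀ᶠ x in 𝓝 0, ψ (φ x) = x
  right_inv : ∀ᶠ y in 𝓝 0, φ (ψ y) = y

variable {𝕜 E F G : Type*} [NormedAddCommGroup E] [NormedAddCommGroup F] [NormedAddCommGroup G]

section NontriviallyNormedField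

variable [NontriviallyNormedField 𝕜] [NormedSpace 𝕜 E] [NormedSpace 𝕜 F] [NormedSpace 𝕜 G]
  {φ : E → F} {ψ : F → E} {X : E → E} {Y Y' : F → F}

lemma tendsto_zero_of_analyticAt (hφ : AnalyticAt 𝕜 φ 0) (h0 : φ 0 = 0) :
    Tendsto φ (𝓝 0) (𝓝 0) := by
  simpa only [h0] using hφ.continuousAt.tendsto

lemma analyticAt_clm_apply {f : E → F →L[𝕜] G} {g : E → F} {x : E} (hf : AnalyticAt 𝕜 f x)
    (hg : AnalyticAt 𝕜 g x) : AnalyticAt 𝕜 (fun y => f y (g y)) x :=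
  ((ContinuousLinearMap.apply 𝕜 G).flip.analyticAt_bilinear (f x, g x)).comp₂ hf hg

namespace RelatedAtZero

lemma congr (h : RelatedAtZero 𝕜 φ X Y) {φ' : E → F} {X' : E → E}
    (hφ : φ' =ᶠ[𝓝 0] φ) (hX : X' =ᶠ[𝓝 0] X) (hY : Y' =ᶠ[𝓝 (φ 0)] Y) (hφc : ContinuousAt φ 0) :
    RelatedAtZero 𝕜 φ' X' Y' := by
  filter_upwards [h, hφ, hφ.fderiv (𝕜 := 𝕜), hX, hφc.eventually hY] with x h h₁ h₂ h₃ h₄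
  rw [h₁, h₂, h₃, h₄, h]

lemma comp [CompleteSpace F] [CompleteSpace G] {χ : F → G} {Z : G → G}
    (hχ : RelatedAtZero 𝕜 χ Y Z) (hφ : RelatedAtZero 𝕜 φ X Y) (hχa : AnalyticAt 𝕜 χ 0)
    (hφa : AnalyticAt 𝕜 φ 0) (hφ0 : φ 0 = 0) : RelatedAtZero 𝕜 (χ ∘ φ) X Z := by
  have hφt := tendsto_zero_of_analyticAt hφa hφ0
  filter_upwards [hφ, hφt.eventually hχ, hφa.eventually_analyticAt,
    hφt.eventually hχa.eventually_analyticAt] with x h₁ h₂ h₃ h₄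
  rw [fderiv_comp x h₄.differentiableAt h₃.differentiableAt, ContinuousLinearMap.comp_apply, h₁,
    h₂, Function.comp_apply]

lemma fderiv_comp_fderiv [CompleteSpace F] (h : RelatedAtZero 𝕜 φ X Y) (hφ : AnalyticAt 𝕜 φ 0)
    (hφ0 : φ 0 = 0) (hX : DifferentiableAt 𝕜 X 0) (hX0 : X 0 = 0) (hY : DifferentiableAt 𝕜 Y 0) :
    fderiv 𝕜 φ 0 ∘L fderiv 𝕜 X 0 = fderiv 𝕜 Y 0 ∘L fderiv 𝕜 φ 0 := by
  have hY' : DifferentiableAt 𝕜 Y (φ 0) := by rwa [hφ0]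
  have hD := EventuallyEq.fderiv_eq (𝕜 := 𝕜) h
  rw [fderiv_clm_apply hφ.fderiv.differentiableAt hX, fderiv_fun_comp 0 hY' hφ.differentiableAt,
    hX0, map_zero, add_zero, hφ0] at hD
  exact hD

end RelatedAtZero

namespace IsInverseGermPair

lemma symm (h : IsInverseGermPair 𝕜 φ ψ) : IsInverseGermPair 𝕜 ψ φ :=
  ⟨h.analyticAt_inv, h.analyticAt, h.inv_map_zero, h.map_zero, h.right_inv, h.left_inv⟩

lemma tendsto (h : IsInverseGermPair 𝕜 φ ψ) : Tendsto φ (𝓝 0) (𝓝 0) :=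
  tendsto_zero_of_analyticAt h.analyticAt h.map_zero

lemma eventuallyEq_of_relatedAtZero (h : IsInverseGermPair 𝕜 φ ψ) (hY : RelatedAtZero 𝕜 φ X Y)
    (hY' : RelatedAtZero 𝕜 φ X Y') : Y =ᶠ[𝓝 0] Y' := by
  filter_upwards [h.right_inv, h.symm.tendsto.eventually hY, h.symm.tendsto.eventually hY']
    with y h₁ h₂ h₃
  rw [← h₁, ← h₂, h₃]

lemma exists_relatedAtZero [CompleteSpace F] (h : IsInverseGermPair 𝕜 φ ψ)
    (hX : AnalyticAt 𝕜 X 0) (hX0 : X 0 = 0) :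
    ∃ Y : F → F, AnalyticAt 𝕜 Y 0 ∧ Y 0 = 0 ∧ RelatedAtZero 𝕜 φ X Y := by
  refine ⟨fun y => fderiv 𝕜 φ (ψ y) (X (ψ y)), analyticAt_clm_apply ?_ ?_, ?_, ?_⟩
  · exact h.analyticAt.fderiv.comp_of_eq h.analyticAt_inv h.inv_map_zero
  · exact hX.comp_of_eq h.analyticAt_inv h.inv_map_zero
  · simp only [h.inv_map_zero, hX0, _root_.map_zero]
  · filter_upwards [h.left_inv] with x hx
    rw [hx]

variable [CompleteSpace E] [CompleteSpace F]

lemma eventually_fderiv_comp_fderiv (h : IsInverseGermPair 𝕜 φ ψ) :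
    ∀ᶠ x in 𝓝 0, fderiv 𝕜 ψ (φ x) ∘L fderiv 𝕜 φ x = ContinuousLinearMap.id 𝕜 E := by
  filter_upwards [h.left_inv.eventually_nhds, h.analyticAt.eventually_analyticAt,
    h.tendsto.eventually h.analyticAt_inv.eventually_analyticAt] with x h₁ h₂ h₃
  rw [← fderiv_fun_comp x h₃.differentiableAt h₂.differentiableAt, EventuallyEq.fderiv_eq h₁,
    fderiv_fun_id]

lemma fderiv_comp_fderiv (h : IsInverseGermPair 𝕜 φ ψ) :
    fderiv 𝕜 ψ 0 ∘L fderiv 𝕜 φ 0 = ContinuousLinearMap.id 𝕜 E := by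
  simpa only [h.map_zero] using h.eventually_fderiv_comp_fderiv.self_of_nhds

lemma bijective_fderiv (h : IsInverseGermPair 𝕜 φ ψ) : Function.Bijective (fderiv 𝕜 φ 0) :=
  Function.bijective_iff_has_inverse.2 ⟨fderiv 𝕜 ψ 0,
    fun v => DFunLike.congr_fun h.fderiv_comp_fderiv v,
    fun v => DFunLike.congr_fun h.symm.fderiv_comp_fderiv v⟩

lemma relatedAtZero_symm (h : IsInverseGermPair 𝕜 φ ψ) (hXY : RelatedAtZero 𝕜 φ X Y) :
    RelatedAtZero 𝕜 ψ Y X := by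
  filter_upwards [h.right_inv, h.symm.tendsto.eventually hXY,
    h.symm.tendsto.eventually h.eventually_fderiv_comp_fderiv] with y h₁ h₂ h₃
  rw [h₁] at h₂ h₃
  rw [← h₂]
  exact DFunLike.congr_fun h₃ (X (ψ y))

end IsInverseGermPair

end NontriviallyNormedField

section RCLike

variable [RCLike 𝕜] [NormedSpace 𝕜 E] [NormedSpace 𝕜 F] {φ : E → F}

lemma RelatedAtZero.lieBracket [CompleteSpace E] [CompleteSpace F] {V W : E → E} {V' W' : F → F}
    (hV : RelatedAtZero 𝕜 φ V V') (hW : RelatedAtZero 𝕜 φ W W') (hφ : AnalyticAt 𝕜 φ 0)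
    (hφ0 : φ 0 = 0) (hVa : AnalyticAt 𝕜 V 0) (hWa : AnalyticAt 𝕜 W 0) (hVa' : AnalyticAt 𝕜 V' 0)
    (hWa' : AnalyticAt 𝕜 W' 0) :
    RelatedAtZero 𝕜 φ (lieBracket 𝕜 V W) (lieBracket 𝕜 V' W') := by
  have hφt := tendsto_zero_of_analyticAt hφ hφ0
  filter_upwards [hV.eventually_nhds, hW.eventually_nhds, hφ.eventually_analyticAt,
    hVa.eventually_analyticAt, hWa.eventually_analyticAt,
    hφt.eventually hVa'.eventually_analyticAt, hφt.eventually hWa'.eventually_analyticAt]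
    with x hV hW hφ hVx hWx hVx' hWx'
  rw [fderiv_apply_lieBracket (hφ.contDiffAt (n := 2)) (by simp) hWx.differentiableAt
    hVx.differentiableAt, EventuallyEq.fderiv_eq hV, EventuallyEq.fderiv_eq hW,
    fderiv_fun_comp x hWx'.differentiableAt hφ.differentiableAt,
    fderiv_fun_comp x hVx'.differentiableAt hφ.differentiableAt, lieBracket_eq,
    ContinuousLinearMap.comp_apply, ContinuousLinearMap.comp_apply, hV.self_of_nhds,
    hW.self_of_nhds]

lemma exists_isInverseGermPair [CompleteSpace E] [CompleteSpace F] (hφ : AnalyticAt 𝕜 φ 0)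
    (hφ0 : φ 0 = 0) (hb : Function.Bijective (fderiv 𝕜 φ 0)) :
    ∃ ψ : F → E, IsInverseGermPair 𝕜 φ ψ := by
  let e : E ≃L[𝕜] F := ContinuousLinearEquiv.ofBijective (fderiv 𝕜 φ 0)
    (LinearMap.ker_eq_bot.2 hb.1) (LinearMap.range_eq_top.2 hb.2)
  have he : HasFDerivAt φ (e : E →L[𝕜] F) 0 := hφ.differentiableAt.hasFDerivAt
  have hc : ContDiffAt 𝕜 ω φ 0 := hφ.contDiffAt
  have hs := hc.hasStrictFDerivAt' he (by simp)
  refine ⟨hc.localInverse he (by simp), hφ, ?_, hφ0, ?_, hs.eventually_left_inverse, ?_⟩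
  · simpa only [hφ0] using (hc.to_localInverse he (by simp)).analyticAt
  · simpa only [hφ0] using hc.localInverse_apply_image he (by simp)
  · have hright := hs.eventually_right_inverse
    rwa [hφ0] at hright

end RCLike

end RelatedGerms

section NormalFormGerm

open Filter Topology VectorField

/-- The germ at `0` of the analytic vector field `Y` is in Poincaré–Dulac normal form, the
semisimple part of its linearization being `S`. That `S` commutes with the linearization follows
from `[Y, S] = 0`, see `IsNormalFormGerm.commute`. -/
structure IsNormalFormGerm (𝕜 : Type*) {E : Type*} [NontriviallyNormedField 𝕜]
    [NormedAddCommGroup E] [NormedSpace 𝕜 E] (Y : E → E) (S : E →L[𝕜] E) : Prop where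
  analyticAt : AnalyticAt 𝕜 Y 0
  map_zero : Y 0 = 0
  isSemisimple : Module.End.IsSemisimple (S : Module.End 𝕜 E)
  isNilpotent : IsNilpotent ((fderiv 𝕜 Y 0 - S : E →L[𝕜] E) : Module.End 𝕜 E)
  lieBracket_eq_zero : ∀ᶠ x in 𝓝 0, lieBracket 𝕜 Y (fun y => S y) x = 0

lemma lieBracket_clm_eq_zero_iff {𝕜 E : Type*} [NontriviallyNormedField 𝕜] [NormedAddCommGroup E]
    [NormedSpace 𝕜 E] {Y : E → E} {S : E →L[𝕜] E} {x : E} :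
    lieBracket 𝕜 Y (fun y => S y) x = 0 ↔ fderiv 𝕜 Y x (S x) = S (Y x) := by
  rw [lieBracket_eq, sub_eq_zero, S.fderiv, eq_comm]

namespace IsNormalFormGerm

section NontriviallyNormedField

variable {𝕜 E : Type*} [NontriviallyNormedField 𝕜] [NormedAddCommGroup E] [NormedSpace 𝕜 E]
  {Y : E → E} {S : E →L[𝕜] E}

lemma relatedAtZero (h : IsNormalFormGerm 𝕜 Y S) :
    RelatedAtZero 𝕜 Y (fun y => S y) (fun y => S y) :=
  h.lieBracket_eq_zero.mono fun _ => lieBracket_clm_eq_zero_iff.1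

lemma commute [CompleteSpace E] (h : IsNormalFormGerm 𝕜 Y S) :
    Commute (S : Module.End 𝕜 E) (fderiv 𝕜 Y 0 - S : E →L[𝕜] E) := by
  have hD := h.relatedAtZero.fderiv_comp_fderiv h.analyticAt h.map_zero S.differentiableAt
    (_root_.map_zero S) S.differentiableAt
  rw [S.fderiv] at hD
  refine LinearMap.ext fun v => ?_
  have hv : S (fderiv 𝕜 Y 0 v) = fderiv 𝕜 Y 0 (S v) := (DFunLike.congr_fun hD v).symm
  simp [hv]

end NontriviallyNormedField

variable {𝕜 E F : Type*} [RCLike 𝕜] [NormedAddCommGroup E] [NormedSpace 𝕜 E]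
  [NormedAddCommGroup F] [NormedSpace 𝕜 F] [FiniteDimensional 𝕜 E] [CompleteSpace F]

lemma of_relatedAtZero {Y : E → E} {S : E →L[𝕜] E} {Y' : F → F} {S' : F →L[𝕜] F} {φ : E → F}
    {ψ : F → E} (h : IsNormalFormGerm 𝕜 Y S) (hφ : IsInverseGermPair 𝕜 φ ψ)
    (hY' : AnalyticAt 𝕜 Y' 0) (hY : RelatedAtZero 𝕜 φ Y Y')
    (hS : RelatedAtZero 𝕜 φ (fun y => S y) (fun y => S' y)) : IsNormalFormGerm 𝕜 Y' S' := by
  have : CompleteSpace E := FiniteDimensional.complete 𝕜 E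
  have hDY := hY.fderiv_comp_fderiv hφ.analyticAt hφ.map_zero h.analyticAt.differentiableAt
    h.map_zero hY'.differentiableAt
  have hDS := hS.fderiv_comp_fderiv hφ.analyticAt hφ.map_zero S.differentiableAt
    (_root_.map_zero S) S'.differentiableAt
  rw [S.fderiv, S'.fderiv] at hDS
  have hDN : fderiv 𝕜 φ 0 ∘L (fderiv 𝕜 Y 0 - S) = (fderiv 𝕜 Y' 0 - S') ∘L fderiv 𝕜 φ 0 := by
    rw [ContinuousLinearMap.comp_sub, ContinuousLinearMap.sub_comp, hDY, hDS]
  have hspan : Submodule.span 𝕜 (Set.range (fderiv 𝕜 φ 0 : E →ₗ[𝕜] F)) = ⊤ := by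
    have hsurj : Function.Surjective (fderiv 𝕜 φ 0 : E →ₗ[𝕜] F) := hφ.bijective_fderiv.2
    rw [hsurj.range_eq, Submodule.span_univ]
  have hbracket := hY.lieBracket hS hφ.analyticAt hφ.map_zero h.analyticAt (S.analyticAt 0) hY'
    (S'.analyticAt 0)
  exact
    { analyticAt := hY'
      map_zero := by
        simpa only [h.map_zero, hφ.map_zero, _root_.map_zero] using hY.self_of_nhds.symm
      isSemisimple := isSemisimple_of_intertwining hspan (DFunLike.congr_fun hDS) h.isSemisimple
      isNilpotent := isNilpotent_of_intertwining hspan (DFunLike.congr_fun hDN) h.isNilpotent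
      lieBracket_eq_zero := by
        filter_upwards [hφ.right_inv, hφ.symm.tendsto.eventually hbracket,
          hφ.symm.tendsto.eventually h.lieBracket_eq_zero] with y h₁ h₂ h₃
        rw [← h₁, ← h₂, h₃, _root_.map_zero] }

end IsNormalFormGerm

end NormalFormGerm

section IntertwiningDefect

open Asymptotics Filter Topology VectorField

/-- The failure of `χ` to relate the linear vector fields `S` and `S'`. -/
noncomputable def intertwiningDefect (𝕜 : Type*) {E F : Type*} [NontriviallyNormedField 𝕜]
    [NormedAddCommGroup E] [NormedSpace 𝕜 E] [NormedAddCommGroup F] [NormedSpace 𝕜 F]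
    (χ : E → F) (S : E →L[𝕜] E) (S' : F →L[𝕜] F) (x : E) : F :=
  fderiv 𝕜 χ x (S x) - S' (χ x)

section RCLike

variable {𝕜 E F : Type*} [RCLike 𝕜] [NormedAddCommGroup E] [NormedSpace 𝕜 E]
  [NormedAddCommGroup F] [NormedSpace 𝕜 F] [CompleteSpace F] {χ : E → F} {S : E →L[𝕜] E}
  {S' : F →L[𝕜] F}

lemma analyticAt_intertwiningDefect (hχ : AnalyticAt 𝕜 χ 0) :
    AnalyticAt 𝕜 (intertwiningDefect 𝕜 χ S S') 0 :=
  (analyticAt_clm_apply hχ.fderiv (S.analyticAt 0)).sub ((S'.analyticAt _).comp hχ)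

lemma fderiv_intertwiningDefect {Y : E → E} {Y' : F → F} {y : E} (hχ : AnalyticAt 𝕜 χ y)
    (hY : DifferentiableAt 𝕜 Y y) (hY' : DifferentiableAt 𝕜 Y' (χ y))
    (hYS : lieBracket 𝕜 Y (fun x => S x) y = 0)
    (hYS' : lieBracket 𝕜 Y' (fun x => S' x) (χ y) = 0)
    (h : ∀ᶠ x in 𝓝 y, fderiv 𝕜 χ x (Y x) = Y' (χ x)) :
    fderiv 𝕜 (intertwiningDefect 𝕜 χ S S') y (Y y) =
      fderiv 𝕜 Y' (χ y) (intertwiningDefect 𝕜 χ S S' y) := by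
  have hχd := hχ.differentiableAt
  have hbracket := fderiv_apply_lieBracket (hχ.contDiffAt (n := 2)) (by simp)
    S.differentiableAt hY
  rw [hYS, EventuallyEq.fderiv_eq h, fderiv_fun_comp y hY' hχd, map_zero, eq_comm,
    sub_eq_zero] at hbracket
  have hSχ : DifferentiableAt 𝕜 (fun x => S' (χ x)) y := S'.differentiableAt.comp y hχd
  unfold intertwiningDefect
  rw [fderiv_fun_sub (hχ.fderiv.differentiableAt.clm_apply S.differentiableAt) hSχ,
    sub_apply, hbracket, fderiv_fun_comp y S'.differentiableAt hχd]
  simp [h.self_of_nhds, lieBracket_clm_eq_zero_iff.1 hYS']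

end RCLike

variable {E F : Type*} [NormedAddCommGroup E] [NormedSpace ℂ E] [NormedAddCommGroup F]
  [NormedSpace ℂ F] {χ : E → F} {S : E →L[ℂ] E} {S' : F →L[ℂ] F}

lemma isBigO_intertwiningDefect_sub_sum [CompleteSpace F]
    {p : FormalMultilinearSeries ℂ E F} (hp : HasFPowerSeriesAt χ p 0) (k : ℕ) :
    (fun y => intertwiningDefect ℂ χ S S' y - ∑ j ∈ Finset.range k,
      homologicalOperator (Fin j) (S : Module.End ℂ E) S' (p j).toMultilinearMap fun _ => y)
      =O[𝓝 0] fun y => ‖y‖ ^ k := by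
  have hpd (j : ℕ) (y : E) : DifferentiableAt ℂ (fun y => p j fun _ => y) y :=
    (hasFDerivAt_diagonal (p j) y).differentiableAt
  have hsum (y : E) : DifferentiableAt ℂ (fun y => ∑ j ∈ Finset.range k, p j fun _ => y) y :=
    DifferentiableAt.fun_sum fun j _ => hpd j y
  have hrem := hp.isBigO_sub_partialSum_pow k
  simp only [zero_add, FormalMultilinearSeries.partialSum] at hrem
  have hremd : ∀ᶠ y in 𝓝 0, DifferentiableAt ℂ
      (fun y => χ y - ∑ j ∈ Finset.range k, p j fun _ => y) y :=
    hp.analyticAt.eventually_analyticAt.mono fun y hy => hy.differentiableAt.sub (hsum y)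
  have hS : (fun y => S y) =O[𝓝 0] fun y => ‖y‖ ^ (0 + 1) := by
    simpa using (S.isBigO_id (𝓝 0)).norm_right
  refine ((isBigO_fderiv_apply 0 hremd hrem hS).sub
    ((S'.isBigO_comp _ (𝓝 0)).trans hrem)).congr' ?_ EventuallyEq.rfl
  filter_upwards [hp.analyticAt.eventually_analyticAt] with y hy
  rw [fderiv_fun_sub hy.differentiableAt (hsum y), fderiv_fun_sum fun j _ => hpd j y]
  simp only [intertwiningDefect, homologicalOperator_diagonal, Finset.sum_sub_distrib,
    sub_apply, sum_apply, map_sub, map_sum]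
  abel

lemma homologicalOperator_diagonal_eq_zero_of_isBigO [FiniteDimensional ℂ E] {k : ℕ} {g : E → F}
    {Y : E → E} {M : E → F →L[ℂ] F} {A : E →L[ℂ] E} {A' : F →L[ℂ] F}
    (q : ContinuousMultilinearMap ℂ (fun _ : Fin k => E) F)
    (hg : ∀ᶠ y in 𝓝 0, DifferentiableAt ℂ g y)
    (hgq : (fun y => g y - q fun _ => y) =O[𝓝 0] fun y => ‖y‖ ^ (k + 1))
    (hY : (fun y => Y y - A y) =O[𝓝 0] fun y => ‖y‖ ^ 2)
    (hM : (fun y => M y - A') =O[𝓝 0] fun y => ‖y‖)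
    (h : ∀ᶠ y in 𝓝 0, fderiv ℂ g y (Y y) = M y (g y)) (y : E) :
    homologicalOperator (Fin k) (A : Module.End ℂ E) A' q.toMultilinearMap (fun _ => y) = 0 := by
  let m := homologicalOperator (Fin k) (A : Module.End ℂ E) A' q.toMultilinearMap
  have hqd (y : E) : DifferentiableAt ℂ (fun y => q fun _ => y) y :=
    (hasFDerivAt_diagonal q y).differentiableAt
  have hq : (fun y => q fun _ => y) =O[𝓝 0] fun y => ‖y‖ ^ k := by
    simpa using isBigO_diagonal q (𝓝 0)
  have hgO : g =O[𝓝 0] fun y => ‖y‖ ^ k := by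
    have hpow := (isLittleO_norm_pow_norm_pow (E' := E) k.lt_succ_self).isBigO
    exact ((hgq.trans hpow).add hq).congr_left fun y => sub_add_cancel _ _
  have hYO : Y =O[𝓝 0] fun y => ‖y‖ ^ (0 + 1) := by
    have hpow := (isLittleO_norm_pow_norm_pow (E' := E) one_lt_two).isBigO
    have hA : (fun y => A y) =O[𝓝 0] fun y => ‖y‖ ^ 1 := by
      simpa using (A.isBigO_id (𝓝 0)).norm_right
    exact ((hY.trans hpow).add hA).congr_left fun y => sub_add_cancel _ _
  have hMg : (fun y => (M y - A') (g y)) =O[𝓝 0] fun y => ‖y‖ ^ (k + 1) := by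
    have hop : (fun y => (M y - A') (g y)) =O[𝓝 0] fun y => ‖M y - A'‖ * ‖g y‖ :=
      IsBigO.of_bound' <| Eventually.of_forall fun y =>
        ((M y - A').le_opNorm (g y)).trans (le_abs_self _)
    exact (hop.trans (hM.norm_left.mul hgO.norm_left)).congr_right fun y => (pow_succ' _ k).symm
  have hqY := isBigO_fderiv_apply 1 (Eventually.of_forall hqd) hq hY
  have hgqY := isBigO_fderiv_apply 0 (hg.mono fun y hy => hy.fun_sub (hqd y)) hgq hYO
  have hA' := (A'.isBigO_comp _ (𝓝 0)).trans hgq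
  refine IsBigO.continuousMultilinearMap_apply_eq_zero
    (p := ⟨m, continuous_of_multilinearMap_finiteDimensional m⟩) ?_ y
  refine (((hMg.sub hqY).sub hgqY).add hA').congr' ?_ EventuallyEq.rfl
  filter_upwards [h, hg] with y hy hgy
  refine Eq.trans ?_ (homologicalOperator_diagonal q A A' y).symm
  rw [fderiv_fun_sub hgy (hqd y)]
  simp only [sub_apply, map_sub, hy]
  abel

variable [FiniteDimensional ℂ E] [FiniteDimensional ℂ F] {Y : E → E} {Y' : F → F}

lemma IsNormalFormGerm.homologicalOperator_diagonal_eq_zero (hY : IsNormalFormGerm ℂ Y S)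
    (hY' : IsNormalFormGerm ℂ Y' S') (hχ0 : χ 0 = 0) (h : RelatedAtZero ℂ χ Y Y')
    {p : FormalMultilinearSeries ℂ E F} (hp : HasFPowerSeriesAt χ p 0) (k : ℕ) (y : E) :
    homologicalOperator (Fin k) (S : Module.End ℂ E) S' (p k).toMultilinearMap (fun _ => y) =
      0 := by
  have : CompleteSpace E := FiniteDimensional.complete ℂ E
  have : CompleteSpace F := FiniteDimensional.complete ℂ F
  induction k using Nat.strong_induction_on generalizing y with
  | _ k ih =>
  have hχ : AnalyticAt ℂ χ 0 := hp.analyticAt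
  have hχt := tendsto_zero_of_analyticAt hχ hχ0
  have hdefect : ∀ᶠ y in 𝓝 0, fderiv ℂ (intertwiningDefect ℂ χ S S') y (Y y) =
      fderiv ℂ Y' (χ y) (intertwiningDefect ℂ χ S S' y) := by
    filter_upwards [hχ.eventually_analyticAt, hY.analyticAt.eventually_analyticAt,
      hχt.eventually hY'.analyticAt.eventually_analyticAt, hY.lieBracket_eq_zero,
      hχt.eventually hY'.lieBracket_eq_zero, h.eventually_nhds] with y h₁ h₂ h₃ h₄ h₅ h₆
    exact fderiv_intertwiningDefect h₁ h₂.differentiableAt h₃.differentiableAt h₄ h₅ h₆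
  have hlead : (fun y => intertwiningDefect ℂ χ S S' y - homologicalOperator (Fin k)
      (S : Module.End ℂ E) S' (p k).toMultilinearMap fun _ => y)
      =O[𝓝 0] fun y => ‖y‖ ^ (k + 1) :=
    (isBigO_intertwiningDefect_sub_sum hp (k + 1)).congr_left fun y => by
      rw [Finset.sum_range_succ, Finset.sum_eq_zero fun i hi => ih i (Finset.mem_range.1 hi) y,
        zero_add]
  have hYlin : (fun y => Y y - fderiv ℂ Y 0 y) =O[𝓝 0] fun y => ‖y‖ ^ 2 := by
    simpa only [hY.map_zero, sub_zero] using isBigO_sub_fderiv_apply hY.analyticAt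
  have hM : (fun y => fderiv ℂ Y' (χ y) - fderiv ℂ Y' 0) =O[𝓝 0] fun y => ‖y‖ := by
    have hM : AnalyticAt ℂ (fun y => fderiv ℂ Y' (χ y)) 0 :=
      hY'.analyticAt.fderiv.comp_of_eq hχ hχ0
    simpa [hχ0] using hM.differentiableAt.isBigO_sub.norm_right
  refine homologicalOperator_mem_diagonalKernel hY.isSemisimple hY.isNilpotent hY.commute
    hY'.isSemisimple hY'.isNilpotent hY'.commute (fun y => ?_) y
  rw [add_sub_cancel, add_sub_cancel]
  exact homologicalOperator_diagonal_eq_zero_of_isBigO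
    ⟨_, continuous_of_multilinearMap_finiteDimensional _⟩
    ((analyticAt_intertwiningDefect hχ).eventually_analyticAt.mono fun y hy => hy.differentiableAt)
    hlead hYlin hM hdefect y

lemma IsNormalFormGerm.relatedAtZero_semisimple (hY : IsNormalFormGerm ℂ Y S)
    (hY' : IsNormalFormGerm ℂ Y' S') (hχ : AnalyticAt ℂ χ 0) (hχ0 : χ 0 = 0)
    (h : RelatedAtZero ℂ χ Y Y') : RelatedAtZero ℂ χ (fun x => S x) (fun x => S' x) := by
  have : CompleteSpace F := FiniteDimensional.complete ℂ F
  obtain ⟨p, hp⟩ := hχ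
  have hzero := eventually_eq_zero_of_forall_isBigO_pow
    (analyticAt_intertwiningDefect (S := S) (S' := S') hp.analyticAt) fun k =>
      (isBigO_intertwiningDefect_sub_sum hp k).congr_left fun y => by
        rw [Finset.sum_eq_zero fun i _ => hY.homologicalOperator_diagonal_eq_zero hY' hχ0 h hp i y,
          sub_zero]
  exact hzero.mono fun y hy => sub_eq_zero.1 hy

end IntertwiningDefect

section TangentNormalization

open Filter Topology

/-- `ψ` is an analytic normalizing transformation of the germ at `0` of the vector field `X`: it is
tangent to the identity and relates `X` to the normal form `Y`, whose semisimple linear part is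
`S`. Here `ψ` maps the given coordinates to the normalizing ones, so it is inverse to the map `φ` of
`AdmitsPDNormalization`. -/
structure IsTangentNormalization (𝕜 : Type*) {E : Type*} [NontriviallyNormedField 𝕜]
    [NormedAddCommGroup E] [NormedSpace 𝕜 E] (X ψ Y : E → E) (S : E →L[𝕜] E) : Prop where
  isNormalFormGerm : IsNormalFormGerm 𝕜 Y S
  analyticAt : AnalyticAt 𝕜 ψ 0
  map_zero : ψ 0 = 0
  fderiv_zero : fderiv 𝕜 ψ 0 = ContinuousLinearMap.id 𝕜 E
  relatedAtZero : RelatedAtZero 𝕜 ψ X Y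

lemma IsInverseGermPair.fderiv_zero {𝕜 E F : Type*} [NontriviallyNormedField 𝕜]
    [NormedAddCommGroup E] [NormedSpace 𝕜 E] [NormedAddCommGroup F] [NormedSpace 𝕜 F]
    [CompleteSpace E] [CompleteSpace F] {φ : E → F} {ψ : F → E} (h : IsInverseGermPair 𝕜 φ ψ) :
    IsInverseGermPair 𝕜 (fderiv 𝕜 φ 0) (fderiv 𝕜 ψ 0) where
  analyticAt := (fderiv 𝕜 φ 0).analyticAt 0
  analyticAt_inv := (fderiv 𝕜 ψ 0).analyticAt 0
  map_zero := _root_.map_zero _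
  inv_map_zero := _root_.map_zero _
  left_inv := Eventually.of_forall fun x => DFunLike.congr_fun h.fderiv_comp_fderiv x
  right_inv := Eventually.of_forall fun y => DFunLike.congr_fun h.symm.fderiv_comp_fderiv y

lemma exists_isTangentNormalization {𝕜 E F : Type*} [RCLike 𝕜] [NormedAddCommGroup E]
    [NormedSpace 𝕜 E] [NormedAddCommGroup F] [NormedSpace 𝕜 F] [FiniteDimensional 𝕜 E]
    [CompleteSpace F] {X : F → F} {φ : E → F} {Y : E → E} {S : E →L[𝕜] E}
    (hY : IsNormalFormGerm 𝕜 Y S) (hφ : AnalyticAt 𝕜 φ 0) (hφ0 : φ 0 = 0)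
    (hb : Function.Bijective (fderiv 𝕜 φ 0)) (h : RelatedAtZero 𝕜 φ Y X) :
    ∃ (ψ Y' : F → F) (S' : F →L[𝕜] F), IsTangentNormalization 𝕜 X ψ Y' S' := by
  have : CompleteSpace E := FiniteDimensional.complete 𝕜 E
  obtain ⟨φ', hφ'⟩ := exists_isInverseGermPair hφ hφ0 hb
  let L := fderiv 𝕜 φ 0
  let L' := fderiv 𝕜 φ' 0
  have hL : IsInverseGermPair 𝕜 L L' := hφ'.fderiv_zero
  obtain ⟨Y', hY', -, hYY'⟩ := hL.exists_relatedAtZero hY.analyticAt hY.map_zero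
  have hS : RelatedAtZero 𝕜 L (fun x => S x) (fun x => (L ∘L S ∘L L') x) :=
    hL.left_inv.mono fun x hx => by
      simp only [L.fderiv, ContinuousLinearMap.comp_apply, hx]
  refine ⟨L ∘ φ', Y', L ∘L S ∘L L', hY.of_relatedAtZero hL hY' hYY' hS, ?_, ?_, ?_, ?_⟩
  · exact (L.analyticAt _).comp hφ'.analyticAt_inv
  · simp only [Function.comp_apply, hφ'.inv_map_zero, map_zero]
  · rw [fderiv_comp 0 L.differentiableAt hφ'.analyticAt_inv.differentiableAt, L.fderiv]
    exact hφ'.symm.fderiv_comp_fderiv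
  · exact hYY'.comp (hφ'.relatedAtZero_symm h) hL.analyticAt hφ'.analyticAt_inv hφ'.inv_map_zero

namespace IsTangentNormalization

variable {𝕜 E : Type*} [RCLike 𝕜] [NormedAddCommGroup E] [NormedSpace 𝕜 E] [CompleteSpace E]
  {X ψ Y : E → E} {S : E →L[𝕜] E}

lemma exists_isInverseGermPair (h : IsTangentNormalization 𝕜 X ψ Y S) :
    ∃ φ, IsInverseGermPair 𝕜 ψ φ :=
  _root_.exists_isInverseGermPair h.analyticAt h.map_zero <| by
    rw [h.fderiv_zero]
    exact Function.bijective_id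

end IsTangentNormalization

theorem admitsPDNormalization_iff {𝕜 : Type*} [RCLike 𝕜] {n : ℕ}
    {X : (Fin n → 𝕜) → (Fin n → 𝕜)} :
    AdmitsPDNormalization 𝕜 X ↔ ∃ ψ Y S, IsTangentNormalization 𝕜 X ψ Y S := by
  constructor
  · rintro ⟨V, Y, φ, hV, h0, hY, hφ, hY0, hφ0, hb, ⟨S, N, hD, hS, hN, -, hYS⟩, h⟩
    have hnf : IsNormalFormGerm 𝕜 Y S :=
      { analyticAt := hY 0 h0
        map_zero := hY0
        isSemisimple := hS
        isNilpotent := by rwa [hD, add_sub_cancel_left]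
        lieBracket_eq_zero := mem_of_superset (hV.mem_nhds h0) hYS }
    exact exists_isTangentNormalization hnf (hφ 0 h0) hφ0 hb (mem_of_superset (hV.mem_nhds h0) h)
  · rintro ⟨ψ, Y, S, h⟩
    obtain ⟨φ, hφ⟩ := h.exists_isInverseGermPair
    have hY := h.isNormalFormGerm
    obtain ⟨V, hV, hVo, h0⟩ := eventually_nhds_iff.1
      (hY.analyticAt.eventually_analyticAt.and (hφ.analyticAt_inv.eventually_analyticAt.and
        (hY.lieBracket_eq_zero.and (hφ.relatedAtZero_symm h.relatedAtZero))))
    refine ⟨V, Y, φ, hVo, h0, fun x hx => (hV x hx).1, fun x hx => (hV x hx).2.1, hY.map_zero,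
      hφ.inv_map_zero, hφ.symm.bijective_fderiv, ⟨S, fderiv 𝕜 Y 0 - S, (add_sub_cancel _ _).symm,
        hY.isSemisimple, hY.isNilpotent, ?_, fun x hx => (hV x hx).2.2.1⟩,
      fun x hx => (hV x hx).2.2.2⟩
    exact ContinuousLinearMap.coe_injective hY.commute

end TangentNormalization

section Convexity

open Filter Topology

section AffineCombination

variable {𝕜 E : Type*} [NontriviallyNormedField 𝕜] [NormedAddCommGroup E] [NormedSpace 𝕜 E]

lemma fderiv_affineCombination {φ ψ : E → E} {x : E} (hφ : DifferentiableAt 𝕜 φ x)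
    (hψ : DifferentiableAt 𝕜 ψ x) (c : 𝕜) : fderiv 𝕜 ((1 - c) • φ + c • ψ) x =
      (1 - c) • fderiv 𝕜 φ x + c • fderiv 𝕜 ψ x :=
  ((hφ.hasFDerivAt.const_smul (1 - c)).add (hψ.hasFDerivAt.const_smul c)).fderiv

lemma RelatedAtZero.affineCombination {φ ψ X : E → E} {S : E →L[𝕜] E}
    (hφ : RelatedAtZero 𝕜 φ X fun x => S x) (hψ : RelatedAtZero 𝕜 ψ X fun x => S x)
    (hφd : ∀ᶠ x in 𝓝 0, DifferentiableAt 𝕜 φ x) (hψd : ∀ᶠ x in 𝓝 0, DifferentiableAt 𝕜 ψ x)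
    (c : 𝕜) : RelatedAtZero 𝕜 ((1 - c) • φ + c • ψ) X fun x => S x := by
  filter_upwards [hφ, hψ, hφd, hψd] with x h₁ h₂ h₃ h₄
  simp [fderiv_affineCombination h₃ h₄, h₁, h₂]

end AffineCombination

namespace IsTangentNormalization

lemma exists_transition {𝕜 E : Type*} [RCLike 𝕜] [NormedAddCommGroup E] [NormedSpace 𝕜 E]
    [CompleteSpace E] {X ψ ψ' Y Y' : E → E} {S S' : E →L[𝕜] E}
    (h : IsTangentNormalization 𝕜 X ψ Y S) (h' : IsTangentNormalization 𝕜 X ψ' Y' S') :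
    ∃ χ : E → E, AnalyticAt 𝕜 χ 0 ∧ χ 0 = 0 ∧ fderiv 𝕜 χ 0 = ContinuousLinearMap.id 𝕜 E ∧
      RelatedAtZero 𝕜 χ Y Y' ∧ χ ∘ ψ =ᶠ[𝓝 0] ψ' := by
  obtain ⟨φ, hφ⟩ := h.exists_isInverseGermPair
  have hDφ : fderiv 𝕜 φ 0 = ContinuousLinearMap.id 𝕜 E := by
    simpa only [h.fderiv_zero, ContinuousLinearMap.comp_id] using hφ.fderiv_comp_fderiv
  refine ⟨ψ' ∘ φ, h'.analyticAt.comp_of_eq hφ.analyticAt_inv hφ.inv_map_zero, ?_, ?_,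
    h'.relatedAtZero.comp (hφ.relatedAtZero_symm h.relatedAtZero) h'.analyticAt
      hφ.analyticAt_inv hφ.inv_map_zero, ?_⟩
  · rw [Function.comp_apply, hφ.inv_map_zero, h'.map_zero]
  · rw [fderiv_comp 0 (by rw [hφ.inv_map_zero]; exact h'.analyticAt.differentiableAt)
      hφ.analyticAt_inv.differentiableAt, hφ.inv_map_zero, h'.fderiv_zero, hDφ,
      ContinuousLinearMap.comp_id]
  · filter_upwards [hφ.left_inv] with x hx
    rw [Function.comp_apply, Function.comp_apply, hx]

variable {E : Type*} [NormedAddCommGroup E] [NormedSpace ℂ E] [FiniteDimensional ℂ E]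
  {X ψ ψ' Y Y' : E → E} {S S' : E →L[ℂ] E}

lemma semisimple_eq (h : IsTangentNormalization ℂ X ψ Y S)
    (h' : IsTangentNormalization ℂ X ψ' Y' S') : S = S' := by
  have : CompleteSpace E := FiniteDimensional.complete ℂ E
  obtain ⟨χ, hχ, hχ0, hDχ, hYY', -⟩ := h.exists_transition h'
  have hSS' := h.isNormalFormGerm.relatedAtZero_semisimple h'.isNormalFormGerm hχ hχ0 hYY'
  simpa only [hDχ, S.fderiv, S'.fderiv, ContinuousLinearMap.id_comp,
    ContinuousLinearMap.comp_id] using hSS'.fderiv_comp_fderiv hχ hχ0 S.differentiableAt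
      (_root_.map_zero S) S'.differentiableAt

lemma exists_affineCombination (h : IsTangentNormalization ℂ X ψ Y S)
    (h' : IsTangentNormalization ℂ X ψ' Y' S') (c : ℂ) :
    ∃ Y'', IsTangentNormalization ℂ X ((1 - c) • ψ + c • ψ') Y'' S := by
  have : CompleteSpace E := FiniteDimensional.complete ℂ E
  obtain ⟨χ, hχ, hχ0, hDχ, hYY', hψψ'⟩ := h.exists_transition h'
  obtain rfl := h.semisimple_eq h'
  have hχS := h.isNormalFormGerm.relatedAtZero_semisimple h'.isNormalFormGerm hχ hχ0 hYY'
  obtain ⟨η, hη_eq⟩ : ∃ η : E → E, η = (1 - c) • _root_.id + c • χ := ⟨_, rfl⟩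
  have hη : AnalyticAt ℂ η 0 := by
    rw [hη_eq]
    exact (analyticAt_id.const_smul (c := 1 - c)).add hχ.const_smul
  have hη0 : η 0 = 0 := by simp [hη_eq, hχ0]
  have hDη : fderiv ℂ η 0 = ContinuousLinearMap.id ℂ E := by
    rw [hη_eq, fderiv_affineCombination differentiableAt_id hχ.differentiableAt, fderiv_id, hDχ,
      ← add_smul, sub_add_cancel, one_smul]
  have hηS : RelatedAtZero ℂ η (fun x => S x) (fun x => S x) := by
    rw [hη_eq]
    exact RelatedAtZero.affineCombination (.of_forall fun x => by simp) hχS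
      (.of_forall fun _ => differentiableAt_id)
      (hχ.eventually_analyticAt.mono fun _ h => h.differentiableAt) c
  obtain ⟨θ, hηθ⟩ : ∃ θ, IsInverseGermPair ℂ η θ :=
    _root_.exists_isInverseGermPair hη hη0 (by rw [hDη]; exact Function.bijective_id)
  obtain ⟨Y'', hY'', -, hYY''⟩ := hηθ.exists_relatedAtZero h.isNormalFormGerm.analyticAt
    h.isNormalFormGerm.map_zero
  have hcomb : (1 - c) • ψ + c • ψ' =ᶠ[𝓝 0] η ∘ ψ := hψψ'.mono fun x hx => by
    simp [hη_eq, ← hx]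
  exact ⟨Y'',
    { isNormalFormGerm := h.isNormalFormGerm.of_relatedAtZero hηθ hY'' hYY'' hηS
      analyticAt := h.analyticAt.const_smul.add h'.analyticAt.const_smul
      map_zero := by simp [h.map_zero, h'.map_zero]
      fderiv_zero := by
        rw [fderiv_affineCombination h.analyticAt.differentiableAt h'.analyticAt.differentiableAt,
          h.fderiv_zero, h'.fderiv_zero, ← add_smul, sub_add_cancel, one_smul]
      relatedAtZero := (hYY''.comp h.relatedAtZero hη h.analyticAt h.map_zero).congr hcomb
        EventuallyEq.rfl EventuallyEq.rfl
        (hη.continuousAt.comp_of_eq h.analyticAt.continuousAt h.map_zero) }⟩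

end IsTangentNormalization

end Convexity

section Conjugation

open Filter Topology

variable {𝕜 E F : Type*}

/-- The conjugate `x ↦ star (f (star x))` of a map `f`. -/
def starConj [Star E] [Star F] (f : E → F) (x : E) : F := star (f (star x))

section NontriviallyNormedField

variable [NontriviallyNormedField 𝕜] [StarRing 𝕜]
  [NormedAddCommGroup E] [NormedSpace 𝕜 E] [StarAddMonoid E] [NormedStarGroup E] [StarModule 𝕜 E]
  [NormedAddCommGroup F] [NormedSpace 𝕜 F] [StarAddMonoid F] [NormedStarGroup F] [StarModule 𝕜 F]

/-- The conjugate of a continuous linear map. -/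
noncomputable def starConjCLM (T : E →L[𝕜] F) : E →L[𝕜] F :=
  (starL 𝕜).toContinuousLinearMap.comp (T.comp (starL 𝕜).toContinuousLinearMap)

@[simp] lemma starConjCLM_apply (T : E →L[𝕜] F) (x : E) : starConjCLM T x = star (T (star x)) :=
  rfl

/-- The conjugate of a continuous multilinear map. -/
noncomputable def starConjMultilinear {ι : Type*}
    (m : ContinuousMultilinearMap 𝕜 (fun _ : ι => E) F) :
    ContinuousMultilinearMap 𝕜 (fun _ : ι => E) F where
  toFun v := star (m fun i => star (v i))
  map_update_add' v i x y := by
    simp only [Function.apply_update (fun _ => star), star_add,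
      ContinuousMultilinearMap.map_update_add]
  map_update_smul' v i c x := by
    simp only [Function.apply_update (fun _ => star), star_smul,
      ContinuousMultilinearMap.map_update_smul, star_star]
  cont := by
    change Continuous fun v : ι → E => star (m fun i => star (v i))
    fun_prop

lemma norm_starConjMultilinear_le {ι : Type*} [Fintype ι]
    (m : ContinuousMultilinearMap 𝕜 (fun _ : ι => E) F) : ‖starConjMultilinear m‖ ≤ ‖m‖ :=
  ContinuousMultilinearMap.opNorm_le_bound (norm_nonneg m) fun v =>
    (norm_star (m fun i => star (v i))).trans_le <| by
      simpa only [norm_star] using m.le_opNorm fun i => star (v i)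

lemma analyticAt_starConj {f : E → F} {x : E} (hf : AnalyticAt 𝕜 f (star x)) :
    AnalyticAt 𝕜 (starConj f) x := by
  obtain ⟨p, r, hp⟩ := hf
  refine ⟨fun k => starConjMultilinear (p k), r, ?_, hp.r_pos, fun {y} hy => ?_⟩
  · exact hp.r_le.trans (FormalMultilinearSeries.radius_le_of_le fun k =>
      norm_starConjMultilinear_le (p k))
  · have hy' : star y ∈ Metric.eball 0 r := by
      rw [mem_eball_zero_iff] at hy ⊢
      simpa only [enorm_eq_nnnorm, nnnorm_star] using hy
    have hsum := (hp.hasSum hy').star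
    rwa [← star_add] at hsum

lemma tendsto_star_zero : Tendsto (star : E → E) (𝓝 0) (𝓝 0) :=
  continuous_star.tendsto' 0 0 (star_zero E)

variable [NormedStarGroup 𝕜]

lemma fderiv_starConj {f : E → F} {x : E} (hf : DifferentiableAt 𝕜 f (star x)) :
    fderiv 𝕜 (starConj f) x = starConjCLM (fderiv 𝕜 f (star x)) := by
  have hD := hf.hasFDerivAt.star_star
  rw [star_star] at hD
  exact hD.fderiv

lemma RelatedAtZero.conj {φ : E → F} {X : E → E} {Y : F → F} (h : RelatedAtZero 𝕜 φ X Y)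
    (hφ : ∀ᶠ x in 𝓝 0, DifferentiableAt 𝕜 φ x) :
    RelatedAtZero 𝕜 (starConj φ) (starConj X) (starConj Y) := by
  filter_upwards [tendsto_star_zero.eventually h, tendsto_star_zero.eventually hφ] with x h₁ h₂
  rw [fderiv_starConj h₂, starConjCLM_apply, starConj, starConj, starConj,
    star_star, star_star, h₁]

lemma IsNormalFormGerm.conj [PerfectField 𝕜] [FiniteDimensional 𝕜 E] [CompleteSpace E]
    {Y : E → E} {S : E →L[𝕜] E} (h : IsNormalFormGerm 𝕜 Y S) :
    IsNormalFormGerm 𝕜 (starConj Y) (starConjCLM S) := by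
  let e : E ≃ₗ⋆[𝕜] E := starLinearEquiv 𝕜
  have hspan : Submodule.span 𝕜 (Set.range e.toLinearMap) = ⊤ := by
    rw [LinearEquiv.coe_toLinearMap, e.surjective.range_eq, Submodule.span_univ]
  have hDY : fderiv 𝕜 (starConj Y) 0 = starConjCLM (fderiv 𝕜 Y 0) := by
    rw [fderiv_starConj (by simpa using h.analyticAt.differentiableAt), star_zero]
  have hYd : ∀ᶠ x in 𝓝 0, DifferentiableAt 𝕜 Y x :=
    h.analyticAt.eventually_analyticAt.mono fun _ hx => hx.differentiableAt
  exact
    { analyticAt := analyticAt_starConj (by simpa using h.analyticAt)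
      map_zero := by simp [starConj, h.map_zero]
      isSemisimple := isSemisimple_of_intertwining (q := e.toLinearMap) hspan
        (fun v => by simp [e]) h.isSemisimple
      isNilpotent := isNilpotent_of_intertwining (q := e.toLinearMap) hspan
        (fun v => by simp [e, hDY]) h.isNilpotent
      lieBracket_eq_zero := (h.relatedAtZero.conj hYd).mono fun x hx =>
        lieBracket_clm_eq_zero_iff.2 hx }

lemma IsTangentNormalization.conj [PerfectField 𝕜] [FiniteDimensional 𝕜 E] [CompleteSpace E]
    {X ψ Y : E → E} {S : E →L[𝕜] E} (h : IsTangentNormalization 𝕜 X ψ Y S) :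
    IsTangentNormalization 𝕜 (starConj X) (starConj ψ) (starConj Y) (starConjCLM S) where
  isNormalFormGerm := h.isNormalFormGerm.conj
  analyticAt := analyticAt_starConj (by simpa using h.analyticAt)
  map_zero := by simp [starConj, h.map_zero]
  fderiv_zero := by
    rw [fderiv_starConj (by simpa using h.analyticAt.differentiableAt), star_zero, h.fderiv_zero]
    ext x
    simp
  relatedAtZero := h.relatedAtZero.conj
    (h.analyticAt.eventually_analyticAt.mono fun _ hx => hx.differentiableAt)

end NontriviallyNormedField

variable [NormedAddCommGroup E] [NormedSpace ℂ E] [FiniteDimensional ℂ E] [StarAddMonoid E]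
  [NormedStarGroup E] [StarModule ℂ E] {X ψ Y : E → E} {S : E →L[ℂ] E}

lemma IsTangentNormalization.exists_starConj_eq (h : IsTangentNormalization ℂ X ψ Y S)
    (hX : starConj X =ᶠ[𝓝 0] X) : ∃ (ψ Y : E → E) (S : E →L[ℂ] E),
      IsTangentNormalization ℂ X ψ Y S ∧ starConj ψ = ψ ∧
        starConj Y =ᶠ[𝓝 0] Y ∧ starConjCLM S = S := by
  have : CompleteSpace E := FiniteDimensional.complete ℂ E
  have hconj {ψ Y S} (h : IsTangentNormalization ℂ X ψ Y S) :
      IsTangentNormalization ℂ X (starConj ψ) (starConj Y) (starConjCLM S) :=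
    { h.conj with
      relatedAtZero := h.conj.relatedAtZero.congr EventuallyEq.rfl hX.symm EventuallyEq.rfl
        h.conj.analyticAt.continuousAt }
  obtain ⟨Y', h'⟩ := h.exists_affineCombination (hconj h) (1 / 2)
  set ψ' := (1 - 1 / 2 : ℂ) • ψ + (1 / 2 : ℂ) • starConj ψ with hψ'
  have hψ : starConj ψ' = ψ' := by
    funext x
    simp only [hψ', starConj, Pi.add_apply, Pi.smul_apply, star_add, star_smul, star_star]
    norm_num [add_comm]
  obtain ⟨φ, hφ⟩ := h'.exists_isInverseGermPair
  have hY : RelatedAtZero ℂ ψ' X (starConj Y') := hψ ▸ (hconj h').relatedAtZero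
  exact ⟨ψ', Y', S, h', hψ, hφ.eventuallyEq_of_relatedAtZero hY h'.relatedAtZero,
    (hconj h').semisimple_eq h'⟩

end Conjugation

section RealPoints

open Filter Topology

variable {ι : Type*}

/-- The inclusion of the real points in `ℂ^ι`. -/
noncomputable def piOfReal (ι : Type*) : (ι → ℝ) →L[ℝ] (ι → ℂ) :=
  ContinuousLinearMap.piMap fun _ => Complex.ofRealCLM

/-- The coordinatewise real part. -/
noncomputable def piRe (ι : Type*) : (ι → ℂ) →L[ℝ] (ι → ℝ) :=
  ContinuousLinearMap.piMap fun _ => Complex.reCLM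

@[simp] lemma piOfReal_apply (x : ι → ℝ) (j : ι) : piOfReal ι x j = x j := rfl

@[simp] lemma piRe_apply (z : ι → ℂ) (j : ι) : piRe ι z j = (z j).re := rfl

@[simp] lemma piRe_piOfReal (x : ι → ℝ) : piRe ι (piOfReal ι x) = x := by
  ext; simp

lemma piOfReal_injective : Function.Injective (piOfReal ι) :=
  Function.LeftInverse.injective piRe_piOfReal

lemma star_piOfReal (x : ι → ℝ) : star (piOfReal ι x) = piOfReal ι x := by
  ext; simp

lemma piOfReal_piRe {z : ι → ℂ} (hz : star z = z) : piOfReal ι (piRe ι z) = z := by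
  ext j
  exact Complex.conj_eq_iff_re.1 (congrFun hz j)

lemma piOfReal_add_I_smul_piOfReal (z : ι → ℂ) :
    piOfReal ι (piRe ι z) + Complex.I • piOfReal ι (piRe ι (-Complex.I • z)) = z := by
  ext j
  simp [Complex.ext_iff]

lemma tendsto_piOfReal : Tendsto (piOfReal ι) (𝓝 0) (𝓝 0) :=
  (piOfReal ι).continuous.tendsto' 0 0 (map_zero _)

/-- The inclusion of the real points, as a map semilinear over `ℝ → ℂ`. -/
noncomputable def piOfRealSemilinear (ι : Type*) :
    (ι → ℝ) →ₛₗ[Complex.ofRealHom] (ι → ℂ) where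
  toFun := piOfReal ι
  map_add' := map_add _
  map_smul' c x := by
    ext
    simp

lemma span_range_piOfRealSemilinear :
    Submodule.span ℂ (Set.range (piOfRealSemilinear ι)) = ⊤ := by
  refine eq_top_iff.2 fun z _ => ?_
  rw [← piOfReal_add_I_smul_piOfReal z]
  exact add_mem (Submodule.subset_span ⟨_, rfl⟩)
    (Submodule.smul_mem _ _ (Submodule.subset_span ⟨_, rfl⟩))

section Linear

variable {T : (ι → ℂ) →L[ℂ] (ι → ℂ)} {t : (ι → ℝ) →L[ℝ] (ι → ℝ)}

lemma isNilpotent_iff_of_piOfReal (h : ∀ v, T (piOfReal ι v) = piOfReal ι (t v)) :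
    IsNilpotent (T : Module.End ℂ (ι → ℂ)) ↔ IsNilpotent (t : Module.End ℝ (ι → ℝ)) :=
  ⟨isNilpotent_of_injective_intertwining (q := piOfRealSemilinear ι) piOfReal_injective
    fun v => (h v).symm,
    isNilpotent_of_intertwining span_range_piOfRealSemilinear fun v => (h v).symm⟩

lemma isSemisimple_iff_of_piOfReal [Finite ι]
    (h : ∀ v, T (piOfReal ι v) = piOfReal ι (t v)) :
    Module.End.IsSemisimple (T : Module.End ℂ (ι → ℂ)) ↔
      Module.End.IsSemisimple (t : Module.End ℝ (ι → ℝ)) :=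
  ⟨isSemisimple_of_injective_intertwining (q := piOfRealSemilinear ι) piOfReal_injective
    span_range_piOfRealSemilinear fun v => (h v).symm,
    isSemisimple_of_intertwining span_range_piOfRealSemilinear fun v => (h v).symm⟩

end Linear

variable {F : Type*} [NormedAddCommGroup F] [NormedSpace ℂ F]

lemma clm_ext_piOfReal {A B : (ι → ℂ) →L[ℂ] F} (h : ∀ x, A (piOfReal ι x) = B (piOfReal ι x)) :
    A = B := by
  ext1 z
  rw [← piOfReal_add_I_smul_piOfReal z]
  simp only [map_add, map_smul, h]

lemma eqOn_zero_of_eventually_ofReal_eq_zero {f : ℂ → F} {U : Set ℂ}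
    (hf : AnalyticOnNhd ℂ f U) (hU : IsPreconnected U) (h0 : 0 ∈ U)
    (h : ∀ᶠ t : ℝ in 𝓝 0, f t = 0) : Set.EqOn f 0 U := by
  have ht : Tendsto (fun t : ℝ => (t : ℂ)) (𝓝[≠] 0) (𝓝[≠] 0) :=
    (Complex.continuous_ofReal.tendsto' 0 0 Complex.ofReal_zero).inf <|
      tendsto_principal_principal.2 fun t ht => by simpa using ht
  exact hf.eqOn_zero_of_preconnected_of_frequently_eq_zero hU h0
    (ht.frequently (h.filter_mono nhdsWithin_le_nhds).frequently)

variable [Fintype ι]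

lemma norm_piOfReal (x : ι → ℝ) : ‖piOfReal ι x‖ = ‖x‖ := by
  simp [Pi.norm_def]

lemma norm_piRe_le (z : ι → ℂ) : ‖piRe ι z‖ ≤ ‖z‖ :=
  (pi_norm_le_iff_of_nonneg (norm_nonneg z)).2 fun j =>
    (Complex.abs_re_le_norm (z j)).trans (norm_le_pi_norm z j)

lemma eqOn_zero_of_piOfReal_eq_zero {f : (ι → ℂ) → F} {δ : ℝ}
    (hf : AnalyticOnNhd ℂ f (Metric.ball 0 δ))
    (h : ∀ x ∈ Metric.ball 0 δ, f (piOfReal ι x) = 0) : Set.EqOn f 0 (Metric.ball 0 δ) := by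
  intro z hz
  set x := piRe ι z
  set y := piRe ι (-Complex.I • z)
  let L : ℂ → (ι → ℂ) := fun t => piOfReal ι x + t • piOfReal ι y
  have hLI : L Complex.I = z := piOfReal_add_I_smul_piOfReal z
  have hLr (t : ℝ) : L t = piOfReal ι (x + t • y) := by
    ext j; simp [L]
  have hconv : Convex ℝ (L ⁻¹' Metric.ball 0 δ) :=
    ((convex_ball 0 δ).translate_preimage_right (piOfReal ι x)).is_linear_preimage
      (f := fun t : ℂ => t • piOfReal ι y) ⟨fun _ _ => add_smul _ _ _, fun _ _ => smul_assoc _ _ _⟩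
  have hx : x ∈ Metric.ball 0 δ := by
    rw [mem_ball_zero_iff] at hz ⊢
    exact (norm_piRe_le z).trans_lt hz
  have hfL : AnalyticOnNhd ℂ (f ∘ L) (L ⁻¹' Metric.ball 0 δ) := fun t ht =>
    (hf _ ht).comp (by fun_prop)
  have h0 : (0 : ℂ) ∈ L ⁻¹' Metric.ball 0 δ := by
    simpa [L, norm_piOfReal] using hx
  have hzero : ∀ᶠ t : ℝ in 𝓝 0, (f ∘ L) t = 0 := by
    have hc : Tendsto (fun t : ℝ => x + t • y) (𝓝 0) (𝓝 x) :=
      Continuous.tendsto' (by fun_prop) _ _ (by simp)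
    filter_upwards [hc (Metric.isOpen_ball.mem_nhds hx)] with t ht
    rw [Function.comp_apply, hLr, h _ ht]
  have hI : (f ∘ L) Complex.I = 0 :=
    eqOn_zero_of_eventually_ofReal_eq_zero hfL hconv.isPreconnected h0 hzero
      (by rwa [Set.mem_preimage, hLI])
  rwa [Function.comp_apply, hLI] at hI

lemma eventuallyEq_of_piOfReal [CompleteSpace F] {f g : (ι → ℂ) → F} (hf : AnalyticAt ℂ f 0)
    (hg : AnalyticAt ℂ g 0) (h : ∀ᶠ x in 𝓝 0, f (piOfReal ι x) = g (piOfReal ι x)) :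
    f =ᶠ[𝓝 0] g := by
  obtain ⟨δ₁, hδ₁, h₁⟩ := Metric.eventually_nhds_iff_ball.1 (hf.sub hg).eventually_analyticAt
  obtain ⟨δ₂, hδ₂, h₂⟩ := Metric.eventually_nhds_iff_ball.1 h
  filter_upwards [Metric.ball_mem_nhds (0 : ι → ℂ) (lt_min hδ₁ hδ₂)] with z hz
  exact sub_eq_zero.1 <| eqOn_zero_of_piOfReal_eq_zero
    (fun z hz => h₁ z (Metric.ball_subset_ball (min_le_left _ _) hz))
    (fun x hx => sub_eq_zero.2 (h₂ x (Metric.ball_subset_ball (min_le_right _ _) hx))) hz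

end RealPoints

section Complexification

open Filter Topology
open scoped NNReal ENNReal

variable {ι κ : Type*} [Fintype ι]

section Multilinear

variable [DecidableEq ι] {k : ℕ}
  (m : ContinuousMultilinearMap ℝ (fun _ : Fin k => ι → ℝ) (κ → ℝ))

/-- The `ℂ`-multilinear extension of an `ℝ`-multilinear map. -/
noncomputable def complexifyMultilinear :
    ContinuousMultilinearMap ℂ (fun _ : Fin k => ι → ℂ) (κ → ℂ) :=
  ∑ i : Fin k → ι, ((ContinuousMultilinearMap.mkPiAlgebra ℂ (Fin k) ℂ).compContinuousLinearMap
    fun j => ContinuousLinearMap.proj (i j)).smulRight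
      (piOfReal κ (m fun j => Pi.single (i j) 1))

lemma complexifyMultilinear_apply (v : Fin k → ι → ℂ) : complexifyMultilinear m v =
    ∑ i : Fin k → ι, (∏ j, v j (i j)) • piOfReal κ (m fun j => Pi.single (i j) 1) := by
  simp [complexifyMultilinear]

lemma complexifyMultilinear_piOfReal (v : Fin k → ι → ℝ) :
    complexifyMultilinear m (fun j => piOfReal ι (v j)) = piOfReal κ (m v) := by
  rw [complexifyMultilinear_apply, ← ContinuousMultilinearMap.coe_coe m,
    multilinearMap_apply_eq_sum_basis (Pi.basisFun ℝ ι), map_sum]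
  refine Finset.sum_congr rfl fun i _ => ?_
  ext l
  simp

lemma norm_complexifyMultilinear_le [Fintype κ] :
    ‖complexifyMultilinear m‖ ≤ (Fintype.card ι : ℝ) ^ k * ‖m‖ := by
  refine ContinuousMultilinearMap.opNorm_le_bound (by positivity) fun v => ?_
  have hterm (i : Fin k → ι) : ‖(∏ j, v j (i j)) • piOfReal κ (m fun j => Pi.single (i j) 1)‖ ≤
      (∏ j, ‖v j‖) * ‖m‖ := by
    rw [norm_smul, norm_prod, norm_piOfReal]
    gcongr with j
    · exact norm_le_pi_norm (v j) (i j)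
    · simpa [Pi.norm_single] using m.le_opNorm fun j => Pi.single (i j) (1 : ℝ)
  rw [complexifyMultilinear_apply]
  refine (norm_sum_le_of_le Finset.univ fun i _ => hterm i).trans_eq ?_
  simp only [Finset.sum_const, Finset.card_univ, Fintype.card_fun, Fintype.card_fin,
    nsmul_eq_mul, Nat.cast_pow]
  ring

end Multilinear

lemma radius_complexifyMultilinear_pos [Fintype κ] [DecidableEq ι]
    {p : FormalMultilinearSeries ℝ (ι → ℝ) (κ → ℝ)} (hp : 0 < p.radius) :
    0 < FormalMultilinearSeries.radius fun k => complexifyMultilinear (p k) := by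
  obtain ⟨s, hs0, hs⟩ := ENNReal.lt_iff_exists_nnreal_btwn.1 hp
  have hs0 : 0 < s := by simpa using hs0
  obtain ⟨C, -, hC⟩ := p.norm_mul_pow_le_of_lt_radius hs
  set N : ℝ≥0 := Fintype.card ι + 1
  have hN : (Fintype.card ι : ℝ) ≤ N := by simp [N]
  have hN0 : 0 < N := by positivity
  refine lt_of_lt_of_le (b := ((s / N : ℝ≥0) : ℝ≥0∞)) (by simpa using by positivity)
    (FormalMultilinearSeries.le_radius_of_bound _ C fun k => ?_)
  calc ‖complexifyMultilinear (p k)‖ * ((s / N : ℝ≥0) : ℝ) ^ k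
      ≤ ((N : ℝ) ^ k * ‖p k‖) * ((s : ℝ) / N) ^ k := by
        gcongr
        · exact (norm_complexifyMultilinear_le (p k)).trans (by gcongr)
        · simp
    _ = ‖p k‖ * (s : ℝ) ^ k := by
        rw [div_pow]
        field_simp
    _ ≤ C := hC k

end Complexification

section IsComplexification

open Filter Topology

variable {ι κ ν : Type*}

lemma fderiv_piOfReal [Finite ι] [Finite κ] {F : (ι → ℂ) → (κ → ℂ)} {f : (ι → ℝ) → (κ → ℝ)}
    {x : ι → ℝ} (hF : DifferentiableAt ℂ F (piOfReal ι x)) (hf : DifferentiableAt ℝ f x)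
    (h : ∀ᶠ y in 𝓝 x, F (piOfReal ι y) = piOfReal κ (f y)) (v : ι → ℝ) :
    fderiv ℂ F (piOfReal ι x) (piOfReal ι v) = piOfReal κ (fderiv ℝ f x v) := by
  have := Fintype.ofFinite ι
  have := Fintype.ofFinite κ
  have hF' := (hF.hasFDerivAt.restrictScalars ℝ).comp x (piOfReal ι).hasFDerivAt
  have hf' := (piOfReal κ).hasFDerivAt.comp x hf.hasFDerivAt
  exact DFunLike.congr_fun (hF'.unique (hf'.congr_of_eventuallyEq h)) v

variable [Fintype ι] [Fintype κ] [Fintype ν]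

/-- The germ of `F` at `0` is holomorphic and restricts to the real analytic germ of `f` on the
real points. -/
structure IsComplexification (F : (ι → ℂ) → (κ → ℂ)) (f : (ι → ℝ) → (κ → ℝ)) : Prop where
  analyticAt : AnalyticAt ℂ F 0
  analyticAt_real : AnalyticAt ℝ f 0
  map_piOfReal : ∀ᶠ x in 𝓝 0, F (piOfReal ι x) = piOfReal κ (f x)

lemma exists_isComplexification {f : (ι → ℝ) → (κ → ℝ)} (hf : AnalyticAt ℝ f 0) :
    ∃ F, IsComplexification F f := by
  classical
  obtain ⟨p, r, hp⟩ := id hf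
  let q : FormalMultilinearSeries ℂ (ι → ℂ) (κ → ℂ) := fun k => complexifyMultilinear (p k)
  have hq0 : 0 < q.radius := radius_complexifyMultilinear_pos (hp.r_pos.trans_le hp.r_le)
  have hq := q.hasFPowerSeriesOnBall hq0
  refine ⟨q.sum, hq.analyticAt, hf, ?_⟩
  filter_upwards [Metric.eball_mem_nhds (0 : ι → ℝ) hp.r_pos,
    tendsto_piOfReal (Metric.eball_mem_nhds (0 : ι → ℂ) hq0)] with x hx hx'
  have hsum := hq.hasSum hx'
  have hsum_real := (piOfReal κ).hasSum (hp.hasSum hx)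
  rw [zero_add] at hsum hsum_real
  exact hsum.unique (hsum_real.congr_fun fun k => complexifyMultilinear_piOfReal (p k) fun _ => x)

lemma isComplexification_of_analyticAt {F : (ι → ℂ) → (κ → ℂ)} {f : (ι → ℝ) → (κ → ℝ)}
    (hF : AnalyticAt ℂ F 0) (h : ∀ᶠ x in 𝓝 0, F (piOfReal ι x) = piOfReal κ (f x)) :
    IsComplexification F f := by
  refine ⟨hF, ?_, h⟩
  have hre : AnalyticAt ℝ (fun x => piRe κ (F (piOfReal ι x))) 0 :=
    ((piRe κ).analyticAt _).comp
      ((hF.restrictScalars (𝕜 := ℝ)).comp_of_eq ((piOfReal ι).analyticAt 0) (map_zero _))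
  exact hre.congr (h.mono fun x hx => by simp only [hx, piRe_piOfReal])

lemma isComplexification_of_starConj_eq {F : (ι → ℂ) → (κ → ℂ)} (hF : AnalyticAt ℂ F 0)
    (h : starConj F =ᶠ[𝓝 0] F) :
    IsComplexification F fun x => piRe κ (F (piOfReal ι x)) := by
  refine isComplexification_of_analyticAt hF ((tendsto_piOfReal.eventually h).mono fun x hx => ?_)
  rw [starConj, star_piOfReal] at hx
  rw [piOfReal_piRe hx]

namespace IsComplexification

variable {F F' : (ι → ℂ) → (κ → ℂ)} {f f' : (ι → ℝ) → (κ → ℝ)} {G : (κ → ℂ) → (ν → ℂ)}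
  {g : (κ → ℝ) → (ν → ℝ)}

lemma eventuallyEq_iff (hF : IsComplexification F f) (hF' : IsComplexification F' f') :
    F =ᶠ[𝓝 0] F' ↔ f =ᶠ[𝓝 0] f' := by
  constructor
  · intro h
    filter_upwards [tendsto_piOfReal.eventually h, hF.map_piOfReal, hF'.map_piOfReal]
      with x hx h₁ h₂
    exact piOfReal_injective (by rw [← h₁, hx, h₂])
  · intro h
    refine eventuallyEq_of_piOfReal hF.analyticAt hF'.analyticAt ?_
    filter_upwards [h, hF.map_piOfReal, hF'.map_piOfReal] with x hx h₁ h₂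
    rw [h₁, hx, h₂]

lemma starConj_eventuallyEq (hF : IsComplexification F f) : starConj F =ᶠ[𝓝 0] F := by
  refine eventuallyEq_of_piOfReal (analyticAt_starConj (by simpa using hF.analyticAt))
    hF.analyticAt (hF.map_piOfReal.mono fun x hx => ?_)
  rw [starConj, star_piOfReal, hx, star_piOfReal]

lemma map_zero_iff (hF : IsComplexification F f) : F 0 = 0 ↔ f 0 = 0 := by
  have h0 := hF.map_piOfReal.self_of_nhds
  rw [map_zero] at h0
  rw [h0, map_eq_zero_iff _ piOfReal_injective]

lemma fderiv_zero_apply (hF : IsComplexification F f) (v : ι → ℝ) :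
    fderiv ℂ F 0 (piOfReal ι v) = piOfReal κ (fderiv ℝ f 0 v) := by
  have h := fderiv_piOfReal (x := 0) (by simpa using hF.analyticAt.differentiableAt)
    hF.analyticAt_real.differentiableAt hF.map_piOfReal v
  rwa [map_zero] at h

lemma comp (hG : IsComplexification G g) (hF : IsComplexification F f) (hf : f 0 = 0) :
    IsComplexification (fun z => G (F z)) fun x => g (f x) where
  analyticAt := hG.analyticAt.comp_of_eq hF.analyticAt (hF.map_zero_iff.2 hf)
  analyticAt_real := hG.analyticAt_real.comp_of_eq hF.analyticAt_real hf
  map_piOfReal := by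
    filter_upwards [hF.map_piOfReal,
      (tendsto_zero_of_analyticAt hF.analyticAt_real hf).eventually hG.map_piOfReal] with x h₁ h₂
    rw [h₁, h₂]

lemma fderiv_apply {V : (ι → ℂ) → (ι → ℂ)} {v : (ι → ℝ) → (ι → ℝ)}
    (hF : IsComplexification F f) (hV : IsComplexification V v) :
    IsComplexification (fun z => fderiv ℂ F z (V z)) fun x => fderiv ℝ f x (v x) where
  analyticAt := analyticAt_clm_apply hF.analyticAt.fderiv hV.analyticAt
  analyticAt_real := analyticAt_clm_apply hF.analyticAt_real.fderiv hV.analyticAt_real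
  map_piOfReal := by
    filter_upwards [hF.map_piOfReal.eventually_nhds, hV.map_piOfReal,
      tendsto_piOfReal.eventually hF.analyticAt.eventually_analyticAt,
      hF.analyticAt_real.eventually_analyticAt] with x h₁ h₂ h₃ h₄
    rw [h₂, fderiv_piOfReal h₃.differentiableAt h₄.differentiableAt h₁]

lemma relatedAtZero_iff {V : (ι → ℂ) → (ι → ℂ)} {v : (ι → ℝ) → (ι → ℝ)}
    {W : (κ → ℂ) → (κ → ℂ)} {w : (κ → ℝ) → (κ → ℝ)} (hF : IsComplexification F f)
    (hf : f 0 = 0) (hV : IsComplexification V v) (hW : IsComplexification W w) :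
    RelatedAtZero ℂ F V W ↔ RelatedAtZero ℝ f v w :=
  (hF.fderiv_apply hV).eventuallyEq_iff (hW.comp hF hf)

lemma fderiv_zero_eq_id_iff {F : (ι → ℂ) → (ι → ℂ)} {f : (ι → ℝ) → (ι → ℝ)}
    (hF : IsComplexification F f) : fderiv ℂ F 0 = ContinuousLinearMap.id ℂ (ι → ℂ) ↔
      fderiv ℝ f 0 = ContinuousLinearMap.id ℝ (ι → ℝ) := by
  refine ⟨fun h => ContinuousLinearMap.ext fun v => piOfReal_injective ?_,
    fun h => clm_ext_piOfReal fun v => ?_⟩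
  · rw [← hF.fderiv_zero_apply, h, ContinuousLinearMap.id_apply, ContinuousLinearMap.id_apply]
  · rw [hF.fderiv_zero_apply, h, ContinuousLinearMap.id_apply, ContinuousLinearMap.id_apply]

end IsComplexification

lemma isComplexification_clm {T : (ι → ℂ) →L[ℂ] (ι → ℂ)} {t : (ι → ℝ) →L[ℝ] (ι → ℝ)}
    (h : ∀ v, T (piOfReal ι v) = piOfReal ι (t v)) : IsComplexification T t :=
  ⟨T.analyticAt 0, t.analyticAt 0, .of_forall h⟩

lemma exists_clm_piOfReal_eq {ι : Type*} [Finite ι] (t : (ι → ℝ) →L[ℝ] (ι → ℝ)) :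
    ∃ T : (ι → ℂ) →L[ℂ] (ι → ℂ), ∀ v, T (piOfReal ι v) = piOfReal ι (t v) := by
  have := Fintype.ofFinite ι
  obtain ⟨F, hF⟩ := exists_isComplexification (t.analyticAt 0)
  exact ⟨fderiv ℂ F 0, fun v => by rw [hF.fderiv_zero_apply, t.fderiv]⟩

lemma exists_clm_real_of_starConjCLM_eq {T : (ι → ℂ) →L[ℂ] (ι → ℂ)} (hT : starConjCLM T = T) :
    ∃ t : (ι → ℝ) →L[ℝ] (ι → ℝ), ∀ v, T (piOfReal ι v) = piOfReal ι (t v) := by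
  refine ⟨piRe ι ∘L T.restrictScalars ℝ ∘L piOfReal ι, fun v => (piOfReal_piRe ?_).symm⟩
  simpa [star_piOfReal] using DFunLike.congr_fun hT (piOfReal ι v)

namespace IsComplexification

variable {X ψ Y : (ι → ℂ) → (ι → ℂ)} {Xr ψr Yr : (ι → ℝ) → (ι → ℝ)}
  {S : (ι → ℂ) →L[ℂ] (ι → ℂ)} {Sr : (ι → ℝ) →L[ℝ] (ι → ℝ)}

lemma isNormalFormGerm_iff (hY : IsComplexification Y Yr)
    (hS : ∀ v, S (piOfReal ι v) = piOfReal ι (Sr v)) :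
    IsNormalFormGerm ℂ Y S ↔ IsNormalFormGerm ℝ Yr Sr := by
  have hN (v : ι → ℝ) : (fderiv ℂ Y 0 - S) (piOfReal ι v) =
      piOfReal ι ((fderiv ℝ Yr 0 - Sr) v) := by
    rw [sub_apply, sub_apply, hY.fderiv_zero_apply, hS, map_sub]
  have hSc := isComplexification_clm hS
  refine ⟨fun h => ⟨hY.analyticAt_real, hY.map_zero_iff.1 h.map_zero,
      (isSemisimple_iff_of_piOfReal hS).1 h.isSemisimple,
      (isNilpotent_iff_of_piOfReal hN).1 h.isNilpotent,
      ((hY.relatedAtZero_iff (hY.map_zero_iff.1 h.map_zero) hSc hSc).1 h.relatedAtZero).mono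
        fun x hx => lieBracket_clm_eq_zero_iff.2 hx⟩,
    fun h => ⟨hY.analyticAt, hY.map_zero_iff.2 h.map_zero,
      (isSemisimple_iff_of_piOfReal hS).2 h.isSemisimple,
      (isNilpotent_iff_of_piOfReal hN).2 h.isNilpotent,
      ((hY.relatedAtZero_iff h.map_zero hSc hSc).2 h.relatedAtZero).mono
        fun x hx => lieBracket_clm_eq_zero_iff.2 hx⟩⟩

lemma isTangentNormalization_iff (hX : IsComplexification X Xr) (hψ : IsComplexification ψ ψr)
    (hY : IsComplexification Y Yr) (hS : ∀ v, S (piOfReal ι v) = piOfReal ι (Sr v)) :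
    IsTangentNormalization ℂ X ψ Y S ↔ IsTangentNormalization ℝ Xr ψr Yr Sr :=
  ⟨fun h => ⟨(hY.isNormalFormGerm_iff hS).1 h.isNormalFormGerm, hψ.analyticAt_real,
      hψ.map_zero_iff.1 h.map_zero, hψ.fderiv_zero_eq_id_iff.1 h.fderiv_zero,
      (hψ.relatedAtZero_iff (hψ.map_zero_iff.1 h.map_zero) hX hY).1 h.relatedAtZero⟩,
    fun h => ⟨(hY.isNormalFormGerm_iff hS).2 h.isNormalFormGerm, hψ.analyticAt,
      hψ.map_zero_iff.2 h.map_zero, hψ.fderiv_zero_eq_id_iff.2 h.fderiv_zero,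
      (hψ.relatedAtZero_iff h.map_zero hX hY).2 h.relatedAtZero⟩⟩

end IsComplexification

end IsComplexification

theorem real_iff_complex_PDNormalization_general {n : ℕ} {X : (Fin n → ℂ) → (Fin n → ℂ)}
    {Xr : (Fin n → ℝ) → (Fin n → ℝ)} (hX : IsComplexification X Xr) :
    AdmitsPDNormalization ℝ Xr ↔ AdmitsPDNormalization ℂ X := by
  rw [admitsPDNormalization_iff, admitsPDNormalization_iff]
  constructor
  · rintro ⟨ψr, Yr, Sr, h⟩
    obtain ⟨ψ, hψ⟩ := exists_isComplexification h.analyticAt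
    obtain ⟨Y, hY⟩ := exists_isComplexification h.isNormalFormGerm.analyticAt
    obtain ⟨S, hS⟩ := exists_clm_piOfReal_eq Sr
    exact ⟨ψ, Y, S, (hX.isTangentNormalization_iff hψ hY hS).2 h⟩
  · rintro ⟨ψ₀, Y₀, S₀, h₀⟩
    obtain ⟨ψ, Y, S, h, hψ, hY, hS⟩ := h₀.exists_starConj_eq hX.starConj_eventuallyEq
    have hψ' := isComplexification_of_starConj_eq h.analyticAt (.of_eq hψ)
    have hY' := isComplexification_of_starConj_eq h.isNormalFormGerm.analyticAt hY
    obtain ⟨Sr, hSr⟩ := exists_clm_real_of_starConjCLM_eq hS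
    exact ⟨_, _, Sr, (hX.isTangentNormalization_iff hψ' hY' hSr).1 h⟩

/-- **Real versus complex Poincaré–Dulac normalization** (Zung). A real
analytic vector field near `0 ∈ ℝⁿ` (presented as the restriction to real
points of a holomorphic vector field `X` near `0 ∈ ℂⁿ` preserving the real
subspace) admits a local real analytic Poincaré–Dulac normalization if and
only if `X` admits a local holomorphic Poincaré–Dulac normalization. -/
theorem real_iff_complex_PDNormalization
    (n : ℕ) (X : (Fin n → ℂ) → (Fin n → ℂ))
    (W : Set (Fin n → ℂ)) (hWopen : IsOpen W) (h0W : (0 : Fin n → ℂ) ∈ W)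
    (hXan : AnalyticOnNhd ℂ X W) (hX0 : X 0 = 0)
    (hreal : ∀ x, (∀ j, (x j).im = 0) → ∀ j, (X x j).im = 0) :
    AdmitsPDNormalization ℝ (fun (x : Fin n → ℝ) (j : Fin n) =>
        (X (fun k => (x k : ℂ)) j).re) ↔
      AdmitsPDNormalization ℂ X := by
  have hXr (x : Fin n → ℝ) : X (piOfReal (Fin n) x) =
      piOfReal (Fin n) (piRe (Fin n) (X (piOfReal (Fin n) x))) := by
    ext j
    exact Complex.ext (by simp) (by simpa using hreal (piOfReal (Fin n) x) (by simp) j)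
  exact real_iff_complex_PDNormalization_general
    (isComplexification_of_analyticAt (hXan 0 h0W) (.of_forall hXr))
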